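/- Let μ be a Borel probability measure on SL₂(ℝ) with a finite exponential moment whose support generates a Zariski dense subgroup. There exist constants C > 0 and ε' > 0 such that for all s > 0, a > 0, t > max{10s, 10}, and all x, x', x_o ∈ X, Σ_{n≥0} μ^{*n}{ g : d(g⁻¹ x_o, x') ≤ e^{−s} and σ(g,x) − t ∈ [0, a] } ≤ C (1 + a)² e^{−ε' s}. -/

import Mathlib

open MeasureTheory Filter

noncomputable section

abbrev SL2 := Matrix.SpecialLinearGroup (Fin 2) ℝ

abbrev PX := Projectivization ℝ (Fin 2 → ℝ)

instance : TopologicalSpace SL2 := instTopologicalSpaceSubtype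
instance : TopologicalSpace PX := instTopologicalSpaceQuotient
instance : MeasurableSpace SL2 := borel _
instance : MeasurableSpace PX := borel _

/-- Euclidean norm on ℝ². -/
def enorm2 (v : Fin 2 → ℝ) : ℝ := Real.sqrt (v 0 ^ 2 + v 1 ^ 2)

/-- Operator norm of g ∈ SL₂(ℝ) w.r.t. the Euclidean norm on ℝ². -/
def opNorm (g : SL2) : ℝ :=
  ‖Matrix.toEuclideanCLM (𝕜 := ℝ) (n := Fin 2) (g : Matrix (Fin 2) (Fin 2) ℝ)‖

/-- Cartan projection κ(g) = log ‖g‖. -/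
def kappa (g : SL2) : ℝ := Real.log (opNorm g)

/-- The projective action of SL₂(ℝ) on ℙ(ℝ²). -/
def act (g : SL2) (x : PX) : PX :=
  Projectivization.map ((Matrix.SpecialLinearGroup.toLin' g).toLinearMap)
    (LinearEquiv.injective _) x

/-- The norm cocycle σ(g, ℝv) = log (‖gv‖/‖v‖). -/
def cocycle (g : SL2) (x : PX) : ℝ :=
  Real.log (enorm2 ((g : Matrix (Fin 2) (Fin 2) ℝ).mulVec x.rep) / enorm2 x.rep)

/-- The sine distance d(ℝv, ℝw) = |det(v,w)|/(‖v‖‖w‖) on ℙ(ℝ²). -/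
def projDist (x y : PX) : ℝ :=
  |x.rep 0 * y.rep 1 - x.rep 1 * y.rep 0| / (enorm2 x.rep * enorm2 y.rep)

/-- An angle θ(x) ∈ ℝ representing x = ℝ(cos θ, sin θ). -/
def pangle (x : PX) : ℝ := Complex.arg (x.rep 0 + x.rep 1 * Complex.I)

/-- The (topological) support of a measure. -/
def measSupp (μ : Measure SL2) : Set SL2 :=
  {g | ∀ U : Set SL2, IsOpen U → g ∈ U → 0 < μ U}

/-- μ has a finite exponential moment. -/
def HasExpMoment (μ : Measure SL2) : Prop :=
  ∃ ε₁ > (0 : ℝ), ∫⁻ g, ENNReal.ofReal (opNorm g ^ ε₁) ∂μ < ⊤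

/-- The group generated by the support of μ is Zariski dense in SL₂(ℝ),
equivalently it is not solvable. -/
def ZariskiDense (μ : Measure SL2) : Prop :=
  ¬ IsSolvable (Subgroup.closure (measSupp μ))

/-- ν is μ-stationary: μ ∗ ν = ν. -/
def IsStationaryMeas (μ : Measure SL2) (ν : Measure PX) : Prop :=
  μ.bind (fun g => ν.map (act g)) = ν

/-- The product g₁ ⋯ gₙ of a word (g₁, …, gₙ). -/
def word {n : ℕ} (g : Fin n → SL2) : SL2 := (List.ofFn g).prod

/-- The product measure μ^{⊗n} on words of length n. -/
def μpi (μ : Measure SL2) (n : ℕ) : Measure (Fin n → SL2) := Measure.pi fun _ => μ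

/-!
The last letters `h = g_{n-m+1} ⋯ g_n` of a word `g₁ ⋯ g_n` almost determine the direction of
`(g₁ ⋯ g_n)⁻¹ x_o`, because `h⁻¹` contracts exponentially, whereas for each fixed `h` the remaining
letters still spread the norm cocycle. Take `m ≈ η t` with `η` small. By the exponential moment,
words shorter than `m` do not reach norm `exp t`. In the others one may replace `(g₁ ⋯ g_n)⁻¹ x_o`
by `h⁻¹ x_o` up to an event of probability exponentially small in `t`, and this direction is
`exp (-s)`-close to `x'` with probability exponentially small in `s`. Conditionally on `h`, the
renewal bound for `g₁ ⋯ g_{n-m}` costs a factor `O(1 + a)`.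

All the exponential bounds come from one fact: for small `δ > 0` the Laplace transform
`𝔼 exp (-δ σ(g, x))` decays exponentially along the walk, uniformly in `x`. This amounts to the
positivity of the mean drift of every stationary law `ν`. A stationary law gives mass less than
`1 / 2` to each line, so `g ↦ ∫ σ(g, y) dν(y)` is proper and strictly convex on the hyperbolic plane
`SO(2) \ SL₂(ℝ)`; if the drift were not positive, the support of `μ` would fix its minimiser, and
the group it generates would be conjugate to a group of rotations.
-/

/-! ### Convolution powers -/

section ConvPow

variable {G : Type*} [MeasurableSpace G]

/-- The convolution power `μ^{*n}` of a measure on a monoid, built by multiplying on the left. -/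
def convPow [Monoid G] (μ : Measure G) : ℕ → Measure G
  | 0 => Measure.dirac 1
  | n + 1 => μ.mconv (convPow μ n)

theorem measurable_listOfFn_prod [Monoid G] [MeasurableMul₂ G] (n : ℕ) :
    Measurable fun g : Fin n → G => (List.ofFn g).prod := by
  have h := List.measurable_fun_prod (List.ofFn fun (i : Fin n) (g : Fin n → G) => g i)
    (by simpa [List.mem_ofFn] using fun i : Fin n => measurable_pi_apply (X := fun _ => G) i)
  simpa [List.map_ofFn, Function.comp_def] using h

variable [Monoid G] [MeasurableMul₂ G] (μ : Measure G) [IsProbabilityMeasure μ]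

instance isProbabilityMeasure_convPow (n : ℕ) : IsProbabilityMeasure (convPow μ n) := by
  induction n with
  | zero => exact Measure.dirac.isProbabilityMeasure
  | succ n ih => exact Measure.probabilitymeasure_of_probabilitymeasures_mconv μ (convPow μ n)

theorem convPow_one : convPow μ 1 = μ := Measure.mconv_dirac_one μ

theorem convPow_add (m n : ℕ) : convPow μ (m + n) = (convPow μ m).mconv (convPow μ n) := by
  induction m with
  | zero => rw [convPow, Measure.dirac_one_mconv, Nat.zero_add]
  | succ m ih => rw [Nat.succ_add, convPow, ih, convPow, Measure.mconv_assoc]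

variable {μ} in
theorem lintegral_convPow_add (m n : ℕ) {f : G → ENNReal} (hf : Measurable f) :
    ∫⁻ g, f g ∂convPow μ (m + n) = ∫⁻ h, ∫⁻ g, f (g * h) ∂convPow μ m ∂convPow μ n := by
  rw [convPow_add, Measure.lintegral_mconv hf]
  exact lintegral_lintegral_swap (hf.comp measurable_mul).aemeasurable

variable {μ} in
theorem convPow_add_apply_eq_prod (m n : ℕ) {s : Set G} (hs : MeasurableSet s) :
    convPow μ (m + n) s = (convPow μ m).prod (convPow μ n) {p | p.1 * p.2 ∈ s} := by
  rw [convPow_add, Measure.mconv, Measure.map_apply measurable_mul hs]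
  rfl

variable {μ} in
theorem convPow_add_apply (m n : ℕ) {s : Set G} (hs : MeasurableSet s) :
    convPow μ (m + n) s = ∫⁻ h, convPow μ m {g | g * h ∈ s} ∂convPow μ n := by
  rw [convPow_add_apply_eq_prod m n hs]
  exact Measure.prod_apply_symm (measurable_mul hs)

variable {μ} in
theorem integral_convPow_succ {f : G → ℝ} {n : ℕ} (hf : Integrable f (convPow μ (n + 1))) :
    ∫ g, ∫ h, f (h * g) ∂μ ∂convPow μ n = ∫ g, f g ∂convPow μ (n + 1) := by
  have hmap : (μ.prod (convPow μ n)).map (fun p => p.1 * p.2) = convPow μ (n + 1) := rfl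
  have hint := (integrable_map_measure (hmap ▸ hf.aestronglyMeasurable)
    measurable_mul.aemeasurable).1 (hmap ▸ hf)
  rw [← hmap, integral_map measurable_mul.aemeasurable (hmap ▸ hf.aestronglyMeasurable)]
  exact (integral_prod_symm _ hint).symm

variable {μ} in
theorem lintegral_convPow_le_pow {f : G → ENNReal} (hf : Measurable f) (h1 : f 1 ≤ 1)
    (hmul : ∀ g h, f (g * h) ≤ f g * f h) (n : ℕ) :
    ∫⁻ g, f g ∂convPow μ n ≤ (∫⁻ g, f g ∂μ) ^ n := by
  induction n with
  | zero => simpa [convPow, lintegral_dirac' _ hf] using h1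
  | succ n ih =>
    rw [convPow, Measure.lintegral_mconv hf, pow_succ', ← lintegral_mul_const _ hf]
    refine lintegral_mono fun g => ?_
    calc ∫⁻ h, f (g * h) ∂convPow μ n ≤ ∫⁻ h, f g * f h ∂convPow μ n :=
          lintegral_mono fun h => hmul g h
      _ = f g * ∫⁻ h, f h ∂convPow μ n := lintegral_const_mul _ hf
      _ ≤ f g * (∫⁻ h, f h ∂μ) ^ n := by gcongr

theorem map_listOfFn_prod_pi (n : ℕ) :
    (Measure.pi fun _ : Fin n => μ).map (fun g => (List.ofFn g).prod) = convPow μ n := by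
  induction n with
  | zero => simp [convPow]
  | succ n ih =>
    have hsplit := measurePreserving_piFinSuccAbove (fun _ : Fin (n + 1) => μ) 0
    have hprod := measurable_listOfFn_prod (G := G) n
    have hfactor : (fun g : Fin (n + 1) → G => (List.ofFn g).prod) =
        (fun p : G × G => p.1 * p.2) ∘ Prod.map id (fun g : Fin n → G => (List.ofFn g).prod) ∘
          MeasurableEquiv.piFinSuccAbove (fun _ => G) 0 := by
      ext g
      simp [List.ofFn_succ, MeasurableEquiv.piFinSuccAbove, Fin.insertNthEquiv, Fin.tail_def]
    rw [hfactor, ← Measure.map_map measurable_mul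
        ((measurable_id.prodMap hprod).comp (MeasurableEquiv.measurable _)),
      ← Measure.map_map (measurable_id.prodMap hprod) (MeasurableEquiv.measurable _),
      hsplit.map_eq, ← Measure.map_prod_map _ _ measurable_id hprod, Measure.map_id, ih]
    rfl

end ConvPow

theorem convPow_map_inv {G : Type*} [Group G] [MeasurableSpace G] [MeasurableMul₂ G]
    [MeasurableInv G] (μ : Measure G) [IsProbabilityMeasure μ] (n : ℕ) :
    convPow (μ.map (·⁻¹)) n = (convPow μ n).map (·⁻¹) := by
  have : IsProbabilityMeasure (μ.map (·⁻¹)) :=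
    Measure.isProbabilityMeasure_map measurable_inv.aemeasurable
  induction n with
  | zero => rw [convPow, convPow, Measure.map_dirac' measurable_inv, inv_one]
  | succ n ih =>
    rw [convPow, ih, convPow_add, convPow_one, Measure.mconv, Measure.mconv,
      Measure.map_prod_map _ _ measurable_inv measurable_inv,
      Measure.map_map (by fun_prop) (by fun_prop), Measure.map_map (by fun_prop) (by fun_prop),
      ← Measure.prod_swap, Measure.map_map (by fun_prop) (by fun_prop)]
    congr 1
    ext p
    simp

/-! ### The plane and the operator norm -/

/-- The Euclidean plane on which `SL₂(ℝ)` acts. -/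
abbrev Plane := EuclideanSpace ℝ (Fin 2)

/-- The linear action of `g` on the plane; its operator norm is `opNorm g`. -/
def linAct (g : SL2) : Plane →L[ℝ] Plane :=
  Matrix.toEuclideanCLM (𝕜 := ℝ) (n := Fin 2) (g : Matrix (Fin 2) (Fin 2) ℝ)

/-- The determinant `det(v, w)` of two vectors of the plane. -/
def det2 (v w : Plane) : ℝ := v 0 * w 1 - v 1 * w 0

/-- The rotation by a quarter turn, used to complete a vector to an orthogonal basis. -/
def rot90 (v : Plane) : Plane := !₂[-v 1, v 0]

section Plane

variable (g h : SL2) (v w : Plane)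

theorem linAct_apply_zero : linAct g v 0 = g 0 0 * v 0 + g 0 1 * v 1 := by
  simp [linAct, Matrix.ofLp_toEuclideanCLM, Matrix.mulVec, dotProduct]

theorem linAct_apply_one : linAct g v 1 = g 1 0 * v 0 + g 1 1 * v 1 := by
  simp [linAct, Matrix.ofLp_toEuclideanCLM, Matrix.mulVec, dotProduct]

theorem linAct_one : linAct 1 v = v := by
  simp [linAct]

theorem linAct_mul : linAct (g * h) v = linAct g (linAct h v) := by
  simp [linAct]

theorem linAct_inv_linAct : linAct g⁻¹ (linAct g v) = v := by
  rw [← linAct_mul, inv_mul_cancel, linAct_one]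

theorem linAct_linAct_inv : linAct g (linAct g⁻¹ v) = v := by
  rw [← linAct_mul, mul_inv_cancel, linAct_one]

variable {v} in
theorem linAct_ne_zero (hv : v ≠ 0) : linAct g v ≠ 0 := fun h =>
  hv (by rw [← linAct_inv_linAct g v, h, map_zero])

theorem norm_linAct_le : ‖linAct g v‖ ≤ opNorm g * ‖v‖ := (linAct g).le_opNorm v

theorem norm_sq_eq : ‖v‖ ^ 2 = v 0 ^ 2 + v 1 ^ 2 := by
  simp [EuclideanSpace.norm_sq_eq]

theorem inner_eq : inner ℝ v w = v 0 * w 0 + v 1 * w 1 := by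
  simp [PiLp.inner_apply, mul_comm]

theorem det2_swap : det2 v w = -det2 w v := by
  simp only [det2]; ring

theorem det2_smul_left (c : ℝ) : det2 (c • v) w = c * det2 v w := by
  simp [det2]; ring

theorem det2_smul_right (c : ℝ) : det2 v (c • w) = c * det2 v w := by
  simp [det2]; ring

theorem det2_sub_right (u : Plane) : det2 u (v - w) = det2 u v - det2 u w := by
  simp [det2]; ring

theorem det2_linAct : det2 (linAct g v) (linAct g w) = det2 v w := by
  have hdet : g 0 0 * g 1 1 - g 0 1 * g 1 0 = 1 := by
    rw [← Matrix.det_fin_two]; exact g.det_coe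
  simp only [det2, linAct_apply_zero, linAct_apply_one]
  linear_combination (v 0 * w 1 - v 1 * w 0) * hdet

theorem det2_linAct_inv : det2 (linAct g⁻¹ v) w = det2 v (linAct g w) := by
  rw [← det2_linAct g, linAct_linAct_inv]

theorem det2_sq_add_inner_sq : det2 v w ^ 2 + inner ℝ v w ^ 2 = (‖v‖ * ‖w‖) ^ 2 := by
  rw [mul_pow, norm_sq_eq, norm_sq_eq, inner_eq, det2]; ring

theorem abs_det2_le : |det2 v w| ≤ ‖v‖ * ‖w‖ :=
  abs_le_of_sq_le_sq (by nlinarith [det2_sq_add_inner_sq v w, sq_nonneg (inner ℝ v w)])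
    (by positivity)

theorem norm_rot90 : ‖rot90 v‖ = ‖v‖ := by
  rw [← sq_eq_sq₀ (norm_nonneg _) (norm_nonneg _), norm_sq_eq, norm_sq_eq]
  simp [rot90]; ring

theorem det2_rot90 : det2 v (rot90 v) = ‖v‖ ^ 2 := by
  rw [norm_sq_eq]; simp [det2, rot90]; ring

theorem norm_sq_smul_eq :
    ‖w‖ ^ 2 • v = (inner ℝ v w : ℝ) • w - det2 v w • rot90 w := by
  rw [norm_sq_eq, inner_eq]
  ext i
  fin_cases i <;> simp [det2, rot90] <;> ring

variable {v w} in
theorem exists_eq_smul_of_det2_eq_zero (hw : w ≠ 0) (h : det2 v w = 0) : ∃ c : ℝ, v = c • w := by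
  have hdecomp := norm_sq_smul_eq v w
  rw [h, zero_smul, sub_zero] at hdecomp
  refine ⟨(‖w‖ ^ 2)⁻¹ * inner ℝ v w, ?_⟩
  rw [mul_smul, ← hdecomp, inv_smul_smul₀ (by simpa using hw)]

variable {v w} in
theorem linAct_ext (hvw : det2 v w ≠ 0) (hv : linAct g v = linAct h v)
    (hw : linAct g w = linAct h w) : g = h := by
  have hcoord (i : Fin 2) : g i 0 = h i 0 ∧ g i 1 = h i 1 := by
    have hvi := congrArg (· i) hv
    have hwi := congrArg (· i) hw
    unfold det2 at hvw
    fin_cases i <;>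
      simp only [Fin.zero_eta, Fin.mk_one, linAct_apply_zero, linAct_apply_one] at hvi hwi ⊢ <;>
      constructor <;> apply mul_left_cancel₀ hvw
    · linear_combination w 1 * hvi - v 1 * hwi
    · linear_combination -w 0 * hvi + v 0 * hwi
    · linear_combination w 1 * hvi - v 1 * hwi
    · linear_combination -w 0 * hvi + v 0 * hwi
  ext i j
  fin_cases j
  · exact (hcoord i).1
  · exact (hcoord i).2

variable {v w} in
theorem abs_det2_triangle {u : Plane} (hu : ‖u‖ = 1) (hv : ‖v‖ = 1) (hw : ‖w‖ = 1) :
    |det2 u w| ≤ |det2 u v| + |det2 v w| := by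
  have hv2 := norm_sq_eq v
  have hsine : det2 u w = det2 u v * inner ℝ v w + inner ℝ u v * det2 v w := by
    simp only [inner_eq, det2]
    rw [hv] at hv2
    linear_combination (u 0 * w 1 - u 1 * w 0) * hv2
  have hcos {a b : Plane} (ha : ‖a‖ = 1) (hb : ‖b‖ = 1) : |inner ℝ a b| ≤ 1 := by
    simpa [ha, hb] using abs_real_inner_le_norm a b
  calc |det2 u w| ≤ |det2 u v * inner ℝ v w| + |inner ℝ u v * det2 v w| := by
        rw [hsine]; exact abs_add_le _ _
    _ ≤ |det2 u v| + |det2 v w| := by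
        rw [abs_mul, abs_mul]
        exact add_le_add (mul_le_of_le_one_right (abs_nonneg _) (hcos hv hw))
          (mul_le_of_le_one_left (abs_nonneg _) (hcos hu hv))

theorem opNorm_nonneg : 0 ≤ opNorm g := norm_nonneg _

theorem opNorm_one : opNorm 1 = 1 := by
  simp [opNorm]

theorem opNorm_mul_le : opNorm (g * h) ≤ opNorm g * opNorm h := by
  have hmul : linAct (g * h) = linAct g * linAct h := by simp [linAct]
  calc opNorm (g * h) = ‖linAct g * linAct h‖ := by rw [← hmul]; rfl
    _ ≤ opNorm g * opNorm h := norm_mul_le _ _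

theorem opNorm_inv_le : opNorm g⁻¹ ≤ opNorm g := by
  refine (linAct g⁻¹).opNorm_le_bound (opNorm_nonneg g) fun z => ?_
  set u := linAct g⁻¹ z
  rcases (norm_nonneg u).eq_or_lt with hu | hu
  · rw [← hu]; exact mul_nonneg (opNorm_nonneg g) (norm_nonneg z)
  refine le_of_mul_le_mul_right ?_ hu
  calc ‖u‖ * ‖u‖ = det2 z (linAct g (rot90 u)) := by
        rw [← det2_linAct_inv, det2_rot90, sq]
    _ ≤ ‖z‖ * ‖linAct g (rot90 u)‖ := (le_abs_self _).trans (abs_det2_le _ _)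
    _ ≤ ‖z‖ * (opNorm g * ‖u‖) := by
        gcongr
        simpa only [norm_rot90] using norm_linAct_le g (rot90 u)
    _ = opNorm g * ‖z‖ * ‖u‖ := by ring

theorem opNorm_inv : opNorm g⁻¹ = opNorm g :=
  (opNorm_inv_le g).antisymm (by simpa using opNorm_inv_le g⁻¹)

theorem one_le_opNorm : 1 ≤ opNorm g := by
  have h := opNorm_mul_le g g⁻¹
  rw [mul_inv_cancel, opNorm_one, opNorm_inv] at h
  nlinarith [opNorm_nonneg g]

theorem opNorm_pos : 0 < opNorm g := one_pos.trans_le (one_le_opNorm g)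

theorem norm_le_opNorm_mul : ‖v‖ ≤ opNorm g * ‖linAct g v‖ := by
  simpa only [linAct_inv_linAct, opNorm_inv] using norm_linAct_le g⁻¹ (linAct g v)

theorem exists_norm_linAct_eq_opNorm : ∃ z, ‖z‖ = 1 ∧ ‖linAct g z‖ = opNorm g := by
  obtain ⟨z, hz, hmax⟩ := (isCompact_sphere (0 : Plane) 1).exists_isMaxOn
    (NormedSpace.sphere_nonempty.2 zero_le_one) (linAct g).continuous.norm.continuousOn
  have hz1 : ‖z‖ = 1 := by simpa using hz
  refine ⟨z, hz1, le_antisymm (by simpa [hz1] using norm_linAct_le g z) ?_⟩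
  exact (linAct g).opNorm_le_of_unit_norm (norm_nonneg _) fun x hx => hmax (by simpa using hx)

/- For a maximising unit vector `z`, the vector `p = g⁻¹ (rot90 (g z))` has norm at most `‖g‖²`
while `det(z, p) = ‖g z‖² = ‖g‖²`, so `p` is `‖g‖²` times the unit normal of `z`. -/
theorem exists_opNorm_sq_smul_linAct_rot90_eq : ∃ z, ‖z‖ = 1 ∧ ‖linAct g z‖ = opNorm g ∧
    opNorm g ^ 2 • linAct g (rot90 z) = rot90 (linAct g z) := by
  obtain ⟨z, hz, hzg⟩ := exists_norm_linAct_eq_opNorm g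
  set p := linAct g⁻¹ (rot90 (linAct g z)) with hp
  have hdet : det2 p z = -opNorm g ^ 2 := by
    rw [hp, det2_linAct_inv, det2_swap, det2_rot90, hzg]
  have hnorm : ‖p‖ ≤ opNorm g ^ 2 := by
    simpa only [opNorm_inv, norm_rot90, hzg, sq] using
      norm_linAct_le g⁻¹ (rot90 (linAct g z))
  have horth : inner ℝ p z = 0 := by
    have := det2_sq_add_inner_sq p z
    rw [hdet, hz, mul_one] at this
    have := pow_le_pow_left₀ (norm_nonneg p) hnorm 2
    exact pow_eq_zero_iff two_ne_zero |>.1 (by nlinarith [sq_nonneg (inner ℝ p z)])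
  have hpz : p = opNorm g ^ 2 • rot90 z := by
    have := norm_sq_smul_eq p z
    rwa [hz, one_pow, one_smul, horth, hdet, zero_smul, zero_sub, neg_smul, neg_neg] at this
  exact ⟨z, hz, hzg, by rw [← map_smul, ← hpz, hp, linAct_linAct_inv]⟩

theorem exists_norm_sq_linAct_eq : ∃ z, ‖z‖ = 1 ∧ ∀ v, ‖linAct g v‖ ^ 2 =
    opNorm g ^ 2 * inner ℝ v z ^ 2 + (opNorm g)⁻¹ ^ 2 * det2 v z ^ 2 := by
  obtain ⟨z, hz, hzg, hrot⟩ := exists_opNorm_sq_smul_linAct_rot90_eq g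
  refine ⟨z, hz, fun v => ?_⟩
  have hg := (opNorm_pos g).ne'
  have hv : v = (inner ℝ v z : ℝ) • z - det2 v z • rot90 z := by
    simpa [hz] using norm_sq_smul_eq v z
  have hgr : linAct g (rot90 z) = (opNorm g ^ 2)⁻¹ • rot90 (linAct g z) := by
    rw [← hrot, inv_smul_smul₀ (by positivity)]
  have hzg2 := norm_sq_eq (linAct g z)
  rw [hzg] at hzg2
  conv_lhs => rw [hv, map_sub, map_smul, map_smul, hgr, norm_sq_eq]
  simp only [rot90, PiLp.sub_apply, PiLp.smul_apply, smul_eq_mul,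
    Matrix.cons_val_zero, Matrix.cons_val_one]
  field_simp
  linear_combination (-(opNorm g ^ 4 * inner ℝ v z ^ 2 + det2 v z ^ 2)) * hzg2

theorem inner_eq_det2_rot90 : inner ℝ v w = det2 v (rot90 w) := by
  simp [inner_eq, det2, rot90]

theorem exists_opNorm_mul_abs_det2_le :
    ∃ w, ‖w‖ = 1 ∧ ∀ v, opNorm g * |det2 v w| ≤ ‖linAct g v‖ := by
  obtain ⟨z, hz, hsq⟩ := exists_norm_sq_linAct_eq g
  refine ⟨rot90 z, by rw [norm_rot90, hz], fun v =>
    abs_le_of_sq_le_sq' ?_ (norm_nonneg _) |>.2⟩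
  rw [hsq, mul_pow, sq_abs, inner_eq_det2_rot90]
  exact le_add_of_nonneg_right (by positivity)

variable {w} in
theorem norm_linAct_inv_mul_norm_linAct_le (hw : w ≠ 0) :
    ‖linAct g⁻¹ v‖ * ‖linAct g w‖ ≤ ‖v‖ * ‖w‖ + |det2 v (linAct g w)| * opNorm g := by
  set u := linAct g w with hu
  have hu0 : 0 < ‖u‖ := norm_pos_iff.2 (linAct_ne_zero g hw)
  have hdecomp : ‖u‖ ^ 2 • linAct g⁻¹ v
      = (inner ℝ v u : ℝ) • w - det2 v u • linAct g⁻¹ (rot90 u) := by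
    rw [← map_smul, norm_sq_smul_eq v u, map_sub, map_smul, map_smul, hu, linAct_inv_linAct]
  refine le_of_mul_le_mul_left ?_ hu0
  calc ‖u‖ * (‖linAct g⁻¹ v‖ * ‖u‖) = ‖‖u‖ ^ 2 • linAct g⁻¹ v‖ := by
        rw [norm_smul, Real.norm_of_nonneg (sq_nonneg _)]; ring
    _ ≤ |inner ℝ v u| * ‖w‖ + |det2 v u| * ‖linAct g⁻¹ (rot90 u)‖ := by
        rw [hdecomp]
        refine (norm_sub_le _ _).trans_eq ?_
        rw [norm_smul, norm_smul, Real.norm_eq_abs, Real.norm_eq_abs]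
    _ ≤ ‖v‖ * ‖u‖ * ‖w‖ + |det2 v u| * (opNorm g * ‖u‖) := by
        gcongr
        · exact abs_real_inner_le_norm v u
        · simpa only [opNorm_inv, norm_rot90] using norm_linAct_le g⁻¹ (rot90 u)
    _ = ‖u‖ * (‖v‖ * ‖w‖ + |det2 v u| * opNorm g) := by ring

@[fun_prop]
theorem continuous_det2 : Continuous fun p : Plane × Plane => det2 p.1 p.2 := by
  unfold det2; fun_prop

@[fun_prop]
theorem continuous_linAct : Continuous linAct :=
  (Matrix.toEuclideanCLM (𝕜 := ℝ) (n := Fin 2)).toAlgEquiv.toLinearMap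
    |>.continuous_of_finiteDimensional.comp continuous_subtype_val

@[fun_prop]
theorem continuous_opNorm : Continuous opNorm := continuous_linAct.norm

theorem isCompact_setOf_opNorm_le (R : ℝ) : IsCompact {g : SL2 | opNorm g ≤ R} := by
  let e := (Matrix.toEuclideanCLM (𝕜 := ℝ) (n := Fin 2))
    |>.toAlgEquiv.toLinearEquiv.toContinuousLinearEquiv
  have hembed : Topology.IsClosedEmbedding fun g : SL2 => e g :=
    e.toHomeomorph.isClosedEmbedding.comp
      (isClosed_eq continuous_id.matrix_det continuous_const).isClosedEmbedding_subtypeVal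
  convert hembed.isCompact_preimage (isCompact_closedBall (0 : Plane →L[ℝ] Plane) R) using 1
  ext g
  simp [e, opNorm]

end Plane

/-! ### Solvable subgroups -/

theorem isSolvable_of_commutator_mem {G : Type*} [Group G] {Γ K : Subgroup G}
    [Group.IsSolvable K] (h : ∀ a ∈ Γ, ∀ b ∈ Γ, (b * a)⁻¹ * (a * b) ∈ K) : Group.IsSolvable Γ := by
  have hK : Group.IsSolvable (K.subgroupOf Γ) :=
    Group.isSolvable_of_isSolvable_injective
      (f := (Γ.subtype.comp (K.subgroupOf Γ).subtype).codRestrict K fun x => x.2)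
      fun x y hxy => Subtype.ext (Subtype.ext (congrArg (fun z : K => (z : G)) hxy))
  refine Group.isSolvable_of_ker_le_range (K.subgroupOf Γ).subtype
    (Abelianization.of : Γ →* Abelianization Γ) ?_
  rw [Abelianization.ker_of, Subgroup.range_subtype, commutator_def, Subgroup.commutator_le]
  intro a _ b _
  rw [Subgroup.mem_subgroupOf, commutatorElement_def]
  simpa [mul_assoc] using h _ (inv_mem a.2) _ (inv_mem b.2)

/-- `g` maps the line spanned by `v` into the line spanned by `w`. -/
def MapsLine (g : SL2) (v w : Plane) : Prop := ∃ c : ℝ, linAct g v = c • w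

namespace MapsLine

variable {g h : SL2} {u v w : Plane}

theorem one (v : Plane) : MapsLine 1 v v := ⟨1, by rw [linAct_one, one_smul]⟩

theorem mul (hg : MapsLine g v w) (hh : MapsLine h u v) : MapsLine (g * h) u w := by
  obtain ⟨c, hc⟩ := hg
  obtain ⟨d, hd⟩ := hh
  exact ⟨d * c, by rw [linAct_mul, hd, map_smul, hc, smul_smul]⟩

theorem inv (hv : v ≠ 0) (hg : MapsLine g v w) : MapsLine g⁻¹ w v := by
  obtain ⟨c, hc⟩ := hg
  have hc0 : c ≠ 0 := fun h => linAct_ne_zero g hv (by rw [hc, h, zero_smul])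
  exact ⟨c⁻¹, by rw [eq_inv_smul_iff₀ hc0, ← map_smul, ← hc, linAct_inv_linAct]⟩

theorem of_det2_eq_zero (hw : w ≠ 0) (h : det2 (linAct g v) w = 0) : MapsLine g v w :=
  exists_eq_smul_of_det2_eq_zero hw h

end MapsLine

/-- The subgroup fixing the vector `v`. -/
def vectorStabilizer (v : Plane) : Subgroup SL2 where
  carrier := {g | linAct g v = v}
  mul_mem' {a b} ha hb := show linAct (a * b) v = v by
    rw [linAct_mul, show linAct b v = v from hb, show linAct a v = v from ha]
  one_mem' := linAct_one v
  inv_mem' {a} ha := by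
    have h := linAct_inv_linAct a v
    rwa [show linAct a v = v from ha] at h

/-- The subgroup fixing the line spanned by the nonzero vector `v`. -/
def lineStabilizer (v : Plane) (hv : v ≠ 0) : Subgroup SL2 where
  carrier := {g | MapsLine g v v}
  mul_mem' := MapsLine.mul
  one_mem' := MapsLine.one v
  inv_mem' := MapsLine.inv hv

theorem isSolvable_vectorStabilizer {v : Plane} (hv : v ≠ 0) :
    Group.IsSolvable (vectorStabilizer v) := by
  have hshear (g : SL2) (hg : linAct g v = v) : ∃ c : ℝ, linAct g (rot90 v) = rot90 v + c • v := by
    obtain ⟨c, hc⟩ := exists_eq_smul_of_det2_eq_zero (v := linAct g (rot90 v) - rot90 v) hv (by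
      rw [det2_swap, det2_sub_right, neg_eq_zero, sub_eq_zero]
      simpa only [hg] using det2_linAct g v (rot90 v))
    exact ⟨c, by rw [← hc, add_sub_cancel]⟩
  refine Group.isSolvable_of_comm fun ⟨a, ha⟩ ⟨b, hb⟩ => Subtype.ext ?_
  obtain ⟨c, hc⟩ := hshear a ha
  obtain ⟨d, hd⟩ := hshear b hb
  replace ha : linAct a v = v := ha
  replace hb : linAct b v = v := hb
  refine linAct_ext _ _ (v := v) (w := rot90 v) ?_ ?_ ?_
  · rw [det2_rot90]
    exact pow_ne_zero 2 (norm_ne_zero_iff.2 hv)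
  · simp only [Subgroup.coe_mul, linAct_mul, ha, hb]
  · simp only [Subgroup.coe_mul, linAct_mul, hc, hd, map_add, map_smul, ha, hb]
    abel

theorem isSolvable_lineStabilizer {v : Plane} (hv : v ≠ 0) :
    Group.IsSolvable (lineStabilizer v hv) := by
  have := isSolvable_vectorStabilizer hv
  refine isSolvable_of_commutator_mem (K := vectorStabilizer v) fun a ha b hb => ?_
  obtain ⟨c, hc⟩ := ha
  obtain ⟨d, hd⟩ := hb
  have hcomm : linAct (a * b) v = linAct (b * a) v := by
    simp only [linAct_mul, hc, hd, map_smul, smul_comm c d v]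
  change linAct ((b * a)⁻¹ * (a * b)) v = v
  rw [linAct_mul, hcomm, linAct_inv_linAct]

theorem isSolvable_closure_of_permutes_lines {S : Set SL2} {u : Fin 2 → Plane}
    (hu : ∀ i, u i ≠ 0)
    (hS : ∀ g ∈ S, ∃ τ : Equiv.Perm (Fin 2), ∀ i, MapsLine g (u i) (u (τ i))) :
    Group.IsSolvable (Subgroup.closure S) := by
  let Permutes (g : SL2) (τ : Equiv.Perm (Fin 2)) : Prop := ∀ i, MapsLine g (u i) (u (τ i))
  have hmul {g h σ τ} (hg : Permutes g σ) (hh : Permutes h τ) : Permutes (g * h) (σ * τ) :=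
    fun i => (hg (τ i)).mul (hh i)
  have hinv {g σ} (hg : Permutes g σ) : Permutes g⁻¹ σ⁻¹ := fun i => by
    simpa using (hg (σ⁻¹ i)).inv (hu _)
  have hclosure (g) (hg : g ∈ Subgroup.closure S) : ∃ τ, Permutes g τ := by
    induction hg using Subgroup.closure_induction with
    | mem g hg => exact hS g hg
    | one => exact ⟨1, fun i => MapsLine.one _⟩
    | mul a b _ _ ha hb =>
      obtain ⟨σ, hσ⟩ := ha
      obtain ⟨τ, hτ⟩ := hb
      exact ⟨σ * τ, hmul hσ hτ⟩
    | inv a _ ha =>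
      obtain ⟨σ, hσ⟩ := ha
      exact ⟨σ⁻¹, hinv hσ⟩
  have := isSolvable_lineStabilizer (hu 0)
  refine isSolvable_of_commutator_mem (K := lineStabilizer (u 0) (hu 0)) fun a ha b hb => ?_
  obtain ⟨σ, hσ⟩ := hclosure a ha
  obtain ⟨τ, hτ⟩ := hclosure b hb
  have hcomm : ∀ σ τ : Equiv.Perm (Fin 2), (τ * σ)⁻¹ * (σ * τ) = 1 := by decide
  have h0 := hmul (hinv (hmul hτ hσ)) (hmul hσ hτ) 0
  rwa [hcomm] at h0

theorem commute_of_opNorm_eq_one {a b : SL2} (ha : opNorm a = 1) (hb : opNorm b = 1) :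
    a * b = b * a := by
  have hrot {k : SL2} (hk : opNorm k = 1) : k 0 0 = k 1 1 ∧ k 0 1 = -k 1 0 := by
    have hdet := k.det_coe
    rw [Matrix.det_fin_two] at hdet
    have hbasis (v : Plane) : ‖linAct k v‖ ^ 2 ≤ ‖v‖ ^ 2 := by
      have := norm_linAct_le k v
      rw [hk, one_mul] at this
      gcongr
    have h0 := hbasis !₂[1, 0]
    have h1 := hbasis !₂[0, 1]
    simp only [norm_sq_eq, linAct_apply_zero, linAct_apply_one] at h0 h1
    simp at h0 h1
    constructor <;> nlinarith [sq_nonneg (k 0 0 - k 1 1), sq_nonneg (k 0 1 + k 1 0)]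
  obtain ⟨ha₀, ha₁⟩ := hrot ha
  obtain ⟨hb₀, hb₁⟩ := hrot hb
  ext i j
  fin_cases i <;> fin_cases j <;>
    simp [Matrix.mul_apply, Fin.sum_univ_two, ha₀, ha₁, hb₀, hb₁] <;> ring

theorem isSolvable_closure_of_opNorm_conj_eq_one {S : Set SL2} (g₀ : SL2)
    (hS : ∀ g ∈ S, opNorm (g₀ * g * g₀⁻¹) = 1) : Group.IsSolvable (Subgroup.closure S) := by
  have hcomm : ∀ a ∈ S, ∀ b ∈ S, a * b = b * a := fun a ha b hb => by
    have h := commute_of_opNorm_eq_one (hS a ha) (hS b hb)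
    have hconj (x y : SL2) : g₀ * x * g₀⁻¹ * (g₀ * y * g₀⁻¹) = g₀ * (x * y) * g₀⁻¹ := by group
    rw [hconj, hconj] at h
    exact mul_left_cancel (mul_right_cancel h)
  have := Subgroup.isMulCommutative_closure hcomm
  exact Group.isSolvable_of_comm mul_comm'

/-! ### Cocycles and stationary measures -/

section Cocycle

variable {G X : Type*} [Monoid G] [MulAction G X]

/-- Additive cocycles over an action: `σ(gh, x) = σ(g, h x) + σ(h, x)`. -/
def IsCocycle (σ : G → X → ℝ) : Prop :=
  ∀ g h x, σ (g * h) x = σ g (h • x) + σ h x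

theorem IsCocycle.map_one {σ : G → X → ℝ} (hσ : IsCocycle σ) (x : X) : σ 1 x = 0 := by
  simpa using hσ 1 1 x

theorem isCocycle_coboundary (f : X → ℝ) : IsCocycle fun (g : G) x => f (g • x) - f x :=
  fun g h x => by simp only [mul_smul, sub_add_sub_cancel]

/-- Stationarity of a measure `ν` under the random walk driven by `μ`: `μ ∗ ν = ν`. -/
def IsStationaryLaw [MeasurableSpace G] [MeasurableSpace X] (μ : Measure G) (ν : Measure X) :
    Prop :=
  (μ.prod ν).map (fun p => p.1 • p.2) = ν

end Cocycle

theorem continuous_integral_of_dominated {G X : Type*} [TopologicalSpace G] [MeasurableSpace G]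
    [OpensMeasurableSpace G] [TopologicalSpace X] [FirstCountableTopology X] {μ : Measure G}
    {σ : G → X → ℝ} {b : G → ℝ} (hcont : Continuous fun p : G × X => σ p.1 p.2)
    (hb : ∀ g x, |σ g x| ≤ b g) (hbi : Integrable b μ) :
    Continuous fun x => ∫ g, σ g x ∂μ :=
  continuous_of_dominated
    (fun x => (hcont.comp (Continuous.prodMk_left x)).aestronglyMeasurable)
    (fun x => ae_of_all _ fun g => hb g x) hbi
    (ae_of_all _ fun g => hcont.comp (Continuous.prodMk_right g))

section KrylovBogoliubov

variable {G X : Type*} [Monoid G] [TopologicalSpace G] [MeasurableSpace G] [BorelSpace G]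
  [TopologicalSpace X] [MeasurableSpace X] [BorelSpace X] [MulAction G X] {μ : Measure G}

/-- The mean of the laws of the first `N + 1` steps of the random walk started at `x`. -/
def empiricalLaw (μ : Measure G) (N : ℕ) (x : X) : Measure X :=
  ((N : ENNReal) + 1)⁻¹ • ∑ k ∈ Finset.range (N + 1), (convPow μ k).map (· • x)

variable [ContinuousSMul G X]

theorem integral_empiricalLaw (N : ℕ) (x : X) {f : X → ℝ} (hf : Continuous f)
    (hfi : ∀ k, Integrable (fun g => f (g • x)) (convPow μ k)) :
    ∫ z, f z ∂empiricalLaw μ N x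
      = ((N : ℝ) + 1)⁻¹ * ∑ k ∈ Finset.range (N + 1), ∫ g, f (g • x) ∂convPow μ k := by
  have hsmul : Measurable fun g : G => g • x := by fun_prop
  rw [empiricalLaw, integral_smul_measure, integral_finsetSum_measure fun k _ =>
    (integrable_map_measure hf.aestronglyMeasurable hsmul.aemeasurable).2 (hfi k)]
  congr 1
  · rw [ENNReal.toReal_inv, ENNReal.toReal_add (by simp) (by simp)]; simp
  · exact Finset.sum_congr rfl fun k _ => integral_map hsmul.aemeasurable hf.aestronglyMeasurable

variable [SecondCountableTopology G] [IsProbabilityMeasure μ]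

theorem integral_integral_smul_sub (ν : Measure X) [IsProbabilityMeasure ν]
    (f : BoundedContinuousFunction X ℝ) :
    ∫ z, ∫ g, (f (g • z) - f z) ∂μ ∂ν
      = ∫ z, f z ∂(μ.prod ν).map (fun p => p.1 • p.2) - ∫ z, f z ∂ν := by
  have hsmul : Measurable fun p : G × X => p.1 • p.2 := by fun_prop
  have hfi : Integrable (fun p : G × X => f (p.1 • p.2)) (μ.prod ν) :=
    .of_bound (by fun_prop : Continuous _).aestronglyMeasurable ‖f‖
      (ae_of_all _ fun p => f.norm_coe_le_norm _)
  have hfzi (z : X) : Integrable (fun g => f (g • z)) μ :=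
    .of_bound (by fun_prop : Continuous _).aestronglyMeasurable ‖f‖
      (ae_of_all _ fun p => f.norm_coe_le_norm _)
  rw [integral_map hsmul.aemeasurable f.continuous.aestronglyMeasurable, integral_prod_symm _ hfi,
    ← integral_sub hfi.integral_prod_right (f.integrable ν)]
  refine integral_congr_ae (ae_of_all _ fun z => ?_)
  dsimp only
  rw [integral_sub (hfzi z) (integrable_const _), integral_const, probReal_univ, one_smul]

variable [ContinuousMul G]

theorem isProbabilityMeasure_empiricalLaw (N : ℕ) (x : X) :
    IsProbabilityMeasure (empiricalLaw μ N x) := by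
  have hmap (k : ℕ) : (convPow μ k).map (· • x) Set.univ = 1 := by
    rw [Measure.map_apply (by fun_prop) .univ, Set.preimage_univ, measure_univ]
  refine ⟨?_⟩
  rw [empiricalLaw, Measure.smul_apply, Measure.finsetSum_apply]
  simpa [hmap] using ENNReal.inv_mul_cancel (by simp) (by finiteness)

theorem integral_empiricalLaw_cocycle [FirstCountableTopology X] {σ : G → X → ℝ} {b : G → ℝ}
    (hcont : Continuous fun p : G × X => σ p.1 p.2) (hb : ∀ g x, |σ g x| ≤ b g)
    (hbi : ∀ n, Integrable b (convPow μ n)) (hσ : IsCocycle σ) (N : ℕ) (x : X) :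
    ∫ z, ∫ g, σ g z ∂μ ∂empiricalLaw μ N x
      = ((N : ℝ) + 1)⁻¹ * ∫ g, σ g x ∂convPow μ (N + 1) := by
  have hb1 : Integrable b μ := by simpa only [convPow_one] using hbi 1
  have hdrift := continuous_integral_of_dominated hcont hb hb1
  have hσc (z : X) : Continuous (σ · z) := hcont.comp (Continuous.prodMk_left z)
  have hσi (n : ℕ) : Integrable (σ · x) (convPow μ n) :=
    (hbi n).mono' (hσc x).aestronglyMeasurable
      (ae_of_all _ fun g => hb g x)
  have hσi1 (z : X) : Integrable (σ · z) μ :=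
    hb1.mono' (hσc z).aestronglyMeasurable
      (ae_of_all _ fun g => hb g z)
  have hdrifti (k : ℕ) : Integrable (fun g => ∫ h, σ h (g • x) ∂μ) (convPow μ k) :=
    .of_bound (hdrift.comp (by fun_prop : Continuous fun g : G => g • x)).aestronglyMeasurable
      (∫ h, b h ∂μ)
      (ae_of_all _ fun g => norm_integral_le_of_norm_le hb1 (ae_of_all _ fun h => hb h _))
  have hincrement (k : ℕ) : ∫ g, ∫ h, σ h (g • x) ∂μ ∂convPow μ k
      = ∫ g, σ g x ∂convPow μ (k + 1) - ∫ g, σ g x ∂convPow μ k := by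
    have hstep (g : G) : ∫ h, σ (h * g) x ∂μ = ∫ h, σ h (g • x) ∂μ + σ g x := by
      simp only [hσ _ g x]
      rw [integral_add (hσi1 _) (integrable_const _), integral_const, probReal_univ, one_smul]
    rw [← integral_convPow_succ (hσi (k + 1))]
    simp only [hstep]
    rw [integral_add (hdrifti k) (hσi k), add_sub_cancel_right]
  have hzero : ∫ g, σ g x ∂convPow μ 0 = 0 := by
    rw [convPow, integral_dirac' _ _ (hσc x).stronglyMeasurable,
      hσ.map_one]
  rw [integral_empiricalLaw N x hdrift hdrifti, Finset.sum_congr rfl fun k _ => hincrement k,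
    Finset.sum_range_sub (fun k => ∫ g, σ g x ∂convPow μ k), hzero, sub_zero]

variable [TopologicalSpace.MetrizableSpace X]

theorem isStationaryLaw_of_tendsto_integral_empiricalLaw {F : Filter ℕ} [F.NeBot] (hF : F ≤ atTop)
    {x : ℕ → X} {ν : Measure X} [IsProbabilityMeasure ν]
    (hν : ∀ f : BoundedContinuousFunction X ℝ,
      Tendsto (fun N => ∫ z, f z ∂empiricalLaw μ N (x N)) F (nhds (∫ z, f z ∂ν))) :
    IsStationaryLaw μ ν := by
  have hsmul : AEMeasurable (fun p : G × X => p.1 • p.2) (μ.prod ν) := by fun_prop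
  have : IsProbabilityMeasure ((μ.prod ν).map fun p : G × X => p.1 • p.2) :=
    Measure.isProbabilityMeasure_map hsmul
  refine ext_of_forall_integral_eq_of_IsFiniteMeasure fun f => ?_
  let τ (g : G) (z : X) : ℝ := f (g • z) - f z
  have hτ : Continuous fun p : G × X => τ p.1 p.2 := by fun_prop
  have hτb (g : G) (z : X) : |τ g z| ≤ 2 * ‖f‖ :=
    f.dist_le_two_norm (g • z) z
  let drift : BoundedContinuousFunction X ℝ :=
    .ofNormedAddCommGroup (fun z => ∫ g, τ g z ∂μ)
      (continuous_integral_of_dominated hτ hτb (integrable_const _)) (2 * ‖f‖) fun z => by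
        simpa using norm_integral_le_of_norm_le_const (μ := μ) (f := (τ · z))
          (ae_of_all _ fun g => hτb g z)
  have hmean (N : ℕ) := integral_empiricalLaw_cocycle (μ := μ) hτ hτb
    (fun n => integrable_const _) (isCocycle_coboundary f) N (x N)
  have hlim0 : Tendsto (fun N : ℕ => ((N : ℝ) + 1)⁻¹ * ∫ g, τ g (x N) ∂convPow μ (N + 1)) F
      (nhds 0) := by
    have hinv : Tendsto (fun N : ℕ => ((N : ℝ) + 1)⁻¹ * (2 * ‖f‖)) F (nhds 0) := by
      simpa using (tendsto_one_div_add_atTop_nhds_zero_nat (𝕜 := ℝ)).mono_left hF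
        |>.mul_const (2 * ‖f‖)
    refine squeeze_zero_norm (fun N => ?_) hinv
    rw [norm_mul, Real.norm_of_nonneg (by positivity : (0 : ℝ) ≤ ((N : ℝ) + 1)⁻¹)]
    gcongr
    simpa using norm_integral_le_of_norm_le_const (μ := convPow μ (N + 1)) (f := (τ · (x N)))
      (ae_of_all _ fun g => hτb g (x N))
  have hdefect : ∫ z, ∫ g, τ g z ∂μ ∂ν = 0 :=
    tendsto_nhds_unique ((hν drift).congr hmean) hlim0
  rw [← sub_eq_zero, ← integral_integral_smul_sub, hdefect]

/- If the drift stayed below `1` along some starting points, a weak limit of the corresponding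
empirical laws would be a stationary measure of nonpositive mean drift. -/
theorem exists_forall_one_le_integral_cocycle [CompactSpace X] {σ : G → X → ℝ} {b : G → ℝ}
    (hcont : Continuous fun p : G × X => σ p.1 p.2) (hb : ∀ g x, |σ g x| ≤ b g)
    (hbi : ∀ n, Integrable b (convPow μ n)) (hσ : IsCocycle σ)
    (hpos : ∀ ν : Measure X, IsProbabilityMeasure ν → IsStationaryLaw μ ν →
      0 < ∫ x, ∫ g, σ g x ∂μ ∂ν) :
    ∃ N, ∀ x, 1 ≤ ∫ g, σ g x ∂convPow μ (N + 1) := by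
  by_contra! hcon
  choose x hx using hcon
  let law (N : ℕ) : ProbabilityMeasure X :=
    ⟨empiricalLaw μ N (x N), isProbabilityMeasure_empiricalLaw N (x N)⟩
  let U : Ultrafilter ℕ := hyperfilter ℕ
  have hU : (U : Filter ℕ) ≤ atTop := Nat.cofinite_eq_atTop ▸ hyperfilter_le_cofinite
  obtain ⟨ν, -, hν⟩ := isCompact_univ.ultrafilter_le_nhds (U.map law) (by simp)
  have hlim := ProbabilityMeasure.tendsto_iff_forall_integral_tendsto.1 hν
  have hinv : Tendsto (fun N : ℕ => ((N : ℝ) + 1)⁻¹) U (nhds 0) := by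
    simpa using (tendsto_one_div_add_atTop_nhds_zero_nat (𝕜 := ℝ)).mono_left hU
  have hb1 : Integrable b μ := by simpa only [convPow_one] using hbi 1
  refine (hpos ν inferInstance
    (isStationaryLaw_of_tendsto_integral_empiricalLaw hU hlim)).not_ge ?_
  refine le_of_tendsto_of_tendsto' (hlim (BoundedContinuousFunction.mkOfCompact
    ⟨_, continuous_integral_of_dominated hcont hb hb1⟩)) hinv fun N => ?_
  refine (integral_empiricalLaw_cocycle hcont hb hbi hσ N (x N)).trans_le ?_
  exact mul_le_of_le_one_right (by positivity) (hx N).le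

end KrylovBogoliubov

/-! ### The action on the unit circle -/

instance : BorelSpace SL2 := ⟨rfl⟩

instance : SecondCountableTopology SL2 :=
  @TopologicalSpace.secondCountableTopology_induced SL2 (Matrix (Fin 2) (Fin 2) ℝ) _
    (inferInstanceAs (SecondCountableTopology (Fin 2 → Fin 2 → ℝ))) Subtype.val

instance : IsTopologicalGroup SL2 := Matrix.SpecialLinearGroup.topologicalGroup

/-- The unit circle of the plane, a double cover of the projective line `PX` on which vectors need
not be normalised. -/
abbrev UnitCircle := Metric.sphere (0 : Plane) 1

section UnitCircle

theorem norm_linAct_pos (g : SL2) (y : UnitCircle) : 0 < ‖linAct g y‖ :=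
  norm_pos_iff.2 (linAct_ne_zero g (ne_zero_of_mem_unit_sphere y))

instance : SMul SL2 UnitCircle where
  smul g y := ⟨‖linAct g y‖⁻¹ • linAct g y, by
    rw [mem_sphere_zero_iff_norm, norm_smul, norm_inv, norm_norm,
      inv_mul_cancel₀ (norm_linAct_pos g y).ne']⟩

theorem UnitCircle.coe_smul (g : SL2) (y : UnitCircle) :
    ((g • y : UnitCircle) : Plane) = ‖linAct g y‖⁻¹ • linAct g y := rfl

theorem norm_linAct_mul (g h : SL2) (y : UnitCircle) :
    ‖linAct (g * h) y‖ = ‖linAct g (h • y : UnitCircle)‖ * ‖linAct h y‖ := by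
  have := (norm_linAct_pos h y).ne'
  rw [UnitCircle.coe_smul, map_smul, norm_smul, norm_inv, norm_norm, linAct_mul]
  field_simp

instance : MulAction SL2 UnitCircle where
  one_smul y := Subtype.ext <| by
    rw [UnitCircle.coe_smul, linAct_one, norm_eq_of_mem_sphere y, inv_one, one_smul]
  mul_smul g h y := Subtype.ext <| by
    rw [UnitCircle.coe_smul, norm_linAct_mul, UnitCircle.coe_smul g, UnitCircle.coe_smul h,
      map_smul, linAct_mul, smul_smul, mul_inv]

theorem continuous_linAct_coe :
    Continuous fun p : SL2 × UnitCircle => linAct p.1 (p.2 : Plane) := by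
  fun_prop

instance : ContinuousSMul SL2 UnitCircle where
  continuous_smul := .subtype_mk ((continuous_linAct_coe.norm.inv₀ fun p =>
    (norm_linAct_pos p.1 p.2).ne').smul continuous_linAct_coe) _

theorem det2_smul_eq_zero_iff {g : SL2} {y : UnitCircle} {v : Plane} :
    det2 (g • y : UnitCircle) v = 0 ↔ det2 y (linAct g⁻¹ v) = 0 := by
  rw [UnitCircle.coe_smul, det2_smul_left, ← det2_linAct_inv, inv_inv,
    mul_eq_zero_iff_left (inv_ne_zero (norm_linAct_pos g y).ne')]

/-- The norm cocycle `log ‖g y‖`, read on the unit circle. -/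
def logNorm (g : SL2) (y : UnitCircle) : ℝ := Real.log ‖linAct g y‖

theorem isCocycle_logNorm : IsCocycle logNorm := fun g h y => by
  rw [logNorm, norm_linAct_mul, Real.log_mul (norm_linAct_pos _ _).ne' (norm_linAct_pos _ _).ne']
  rfl

@[fun_prop]
theorem continuous_logNorm : Continuous fun p : SL2 × UnitCircle => logNorm p.1 p.2 :=
  continuous_linAct_coe.norm.log fun p => (norm_linAct_pos p.1 p.2).ne'

theorem abs_logNorm_le (g : SL2) (y : UnitCircle) : |logNorm g y| ≤ Real.log (opNorm g) := by
  have hpos := norm_linAct_pos g y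
  have hupper : ‖linAct g y‖ ≤ opNorm g := by
    simpa only [norm_eq_of_mem_sphere y, mul_one] using norm_linAct_le g y
  have hlower : 1 ≤ opNorm g * ‖linAct g y‖ := by
    simpa only [norm_eq_of_mem_sphere y] using norm_le_opNorm_mul g y
  refine abs_le.2 ⟨?_, Real.log_le_log hpos hupper⟩
  have := Real.log_nonneg hlower
  rw [Real.log_mul (opNorm_pos g).ne' hpos.ne'] at this
  rw [logNorm]
  linarith

end UnitCircle

theorem mem_of_mem_measSupp {μ : Measure SL2} {C : Set SL2} (hC : IsClosed C)
    (h : ∀ᵐ g ∂μ, g ∈ C) {g : SL2} (hg : g ∈ measSupp μ) : g ∈ C := by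
  by_contra hgC
  exact (hg Cᶜ hC.isOpen_compl hgC).ne' h

section ExpMoment

variable {μ : Measure SL2} {ε Λ : ℝ}

/-- The moments of order `ε` of the convolution powers of `μ` grow at most like `exp (Λ n)`. -/
def MomentGrowth (μ : Measure SL2) (ε Λ : ℝ) : Prop :=
  ∀ n : ℕ, ∫⁻ g, ENNReal.ofReal (opNorm g ^ ε) ∂convPow μ n ≤ ENNReal.ofReal (Real.exp (Λ * n))

theorem MomentGrowth.integrable_opNorm_rpow (h : MomentGrowth μ ε Λ) (n : ℕ) :
    Integrable (fun g => opNorm g ^ ε) (convPow μ n) := by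
  refine ⟨(continuous_opNorm.measurable.pow_const ε).aestronglyMeasurable, ?_⟩
  rw [hasFiniteIntegral_iff_ofReal (ae_of_all _ fun g => Real.rpow_nonneg (opNorm_nonneg g) _)]
  exact (h n).trans_lt ENNReal.ofReal_lt_top

theorem MomentGrowth.integrable_log_opNorm (h : MomentGrowth μ ε Λ) (hε : 0 < ε) (n : ℕ) :
    Integrable (fun g => Real.log (opNorm g)) (convPow μ n) := by
  refine ((h.integrable_opNorm_rpow n).div_const ε).mono'
    continuous_opNorm.measurable.log.aestronglyMeasurable (ae_of_all _ fun g => ?_)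
  rw [Real.norm_of_nonneg (Real.log_nonneg (one_le_opNorm g))]
  exact Real.log_le_rpow_div (opNorm_nonneg g) hε

variable [IsProbabilityMeasure μ]

theorem HasExpMoment.exists_momentGrowth (h : HasExpMoment μ) :
    ∃ ε > 0, ∃ Λ > 0, MomentGrowth μ ε Λ := by
  obtain ⟨ε, hε, hfin⟩ := h
  obtain ⟨Λ, hΛ, hbound⟩ : ∃ Λ > 0, ∫⁻ g, ENNReal.ofReal (opNorm g ^ ε) ∂μ
      ≤ ENNReal.ofReal (Real.exp Λ) := by
    refine ⟨(∫⁻ g, ENNReal.ofReal (opNorm g ^ ε) ∂μ).toReal + 1, by positivity,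
      (ENNReal.le_ofReal_iff_toReal_le hfin.ne (Real.exp_nonneg _)).2 ?_⟩
    linarith [Real.add_one_le_exp ((∫⁻ g, ENNReal.ofReal (opNorm g ^ ε) ∂μ).toReal + 1)]
  refine ⟨ε, hε, Λ, hΛ, fun n => ?_⟩
  calc ∫⁻ g, ENNReal.ofReal (opNorm g ^ ε) ∂convPow μ n
      ≤ (∫⁻ g, ENNReal.ofReal (opNorm g ^ ε) ∂μ) ^ n := by
        refine lintegral_convPow_le_pow (by fun_prop)
          (by rw [opNorm_one, Real.one_rpow, ENNReal.ofReal_one]) (fun g h => ?_) n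
        rw [← ENNReal.ofReal_mul (Real.rpow_nonneg (opNorm_nonneg g) ε),
          ← Real.mul_rpow (opNorm_nonneg g) (opNorm_nonneg h)]
        gcongr
        exacts [opNorm_nonneg _, opNorm_mul_le g h]
    _ ≤ ENNReal.ofReal (Real.exp Λ) ^ n := by gcongr
    _ = ENNReal.ofReal (Real.exp (Λ * n)) := by
        rw [← ENNReal.ofReal_pow (Real.exp_nonneg _), ← Real.exp_nat_mul, mul_comm]

theorem MomentGrowth.map_inv (h : MomentGrowth μ ε Λ) : MomentGrowth (μ.map (·⁻¹)) ε Λ := by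
  intro n
  rw [convPow_map_inv, lintegral_map (by fun_prop) measurable_inv]
  simpa only [opNorm_inv] using h n

end ExpMoment

/-! ### Stationary measures give mass less than one half to lines -/

section LineMass

/-- The mass that `ν` gives to the line spanned by `v`. -/
def lineMass (ν : Measure UnitCircle) (v : Plane) : ENNReal := ν {y | det2 y v = 0}

variable {ν : Measure UnitCircle} {u v w : Plane}

theorem isClosed_setOf_det2_eq_zero (v : Plane) : IsClosed {y : UnitCircle | det2 y v = 0} :=
  isClosed_eq (by fun_prop) continuous_const

theorem det2_eq_zero_trans (hv : v ≠ 0) (huv : det2 u v = 0) (hvw : det2 v w = 0) :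
    det2 u w = 0 := by
  obtain ⟨c, rfl⟩ := exists_eq_smul_of_det2_eq_zero hv huv
  rw [det2_smul_left, hvw, mul_zero]

theorem disjoint_lines (h : det2 v w ≠ 0) :
    Disjoint {y : UnitCircle | det2 y v = 0} {y : UnitCircle | det2 y w = 0} := by
  refine Set.disjoint_left.2 fun y (hv : det2 y v = 0) hw =>
    h (det2_eq_zero_trans (ne_zero_of_mem_unit_sphere y) ?_ hw)
  rw [det2_swap, hv, neg_zero]

theorem lineMass_eq_of_det2_eq_zero (hv : v ≠ 0) (hw : w ≠ 0) (h : det2 v w = 0) :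
    lineMass ν v = lineMass ν w := by
  have hwv : det2 w v = 0 := by rw [det2_swap, h, neg_zero]
  exact congrArg ν <| Set.ext fun _ =>
    ⟨fun hy => det2_eq_zero_trans hv hy h, fun hy => det2_eq_zero_trans hw hy hwv⟩

theorem lineMass_add_le_one [IsProbabilityMeasure ν] (h : det2 v w ≠ 0) :
    lineMass ν v + lineMass ν w ≤ 1 := by
  rw [lineMass, lineMass,
    ← measure_union (disjoint_lines h) (isClosed_setOf_det2_eq_zero w).measurableSet]
  exact prob_le_one

theorem not_ae_det2_eq_zero_or [IsProbabilityMeasure ν] (h : ∀ v ≠ 0, lineMass ν v < 1 / 2)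
    (hv : v ≠ 0) (hw : w ≠ 0) : ¬ ∀ᵐ y : UnitCircle ∂ν, det2 y v = 0 ∨ det2 y w = 0 := fun hae => by
  have hmeas (v : Plane) := (isClosed_setOf_det2_eq_zero v).measurableSet
  have hone : ν {y | det2 y v = 0 ∨ det2 y w = 0} = 1 :=
    (mem_ae_iff_prob_eq_one ((hmeas v).union (hmeas w))).1 hae
  have hlt := ENNReal.add_lt_add (h v hv) (h w hw)
  rw [ENNReal.add_halves] at hlt
  exact (measure_union_le _ _).not_gt (hlt.trans_eq hone.symm)

theorem lineMass_add_add_le_one [IsProbabilityMeasure ν] (hvw : det2 v w ≠ 0)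
    (hvu : det2 v u ≠ 0) (hwu : det2 w u ≠ 0) :
    lineMass ν v + lineMass ν w + lineMass ν u ≤ 1 := by
  rw [lineMass, lineMass, lineMass,
    ← measure_union (disjoint_lines hvw) (isClosed_setOf_det2_eq_zero w).measurableSet,
    ← measure_union ((disjoint_lines hvu).union_left (disjoint_lines hwu))
      (isClosed_setOf_det2_eq_zero u).measurableSet]
  exact prob_le_one

theorem lineMass_le_of_half_le [IsProbabilityMeasure ν] (hv : v ≠ 0) (hhalf : 1 / 2 ≤ lineMass ν v)
    (hw : w ≠ 0) : lineMass ν w ≤ lineMass ν v := by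
  by_cases h : det2 v w = 0
  · exact (lineMass_eq_of_det2_eq_zero hv hw h).ge
  · refine le_trans ?_ hhalf
    by_contra! hlt
    have := ENNReal.add_lt_add_of_le_of_lt (by simp) hhalf hlt
    rw [ENNReal.add_halves] at this
    exact (lineMass_add_le_one h).not_gt this

theorem exists_pair_of_half_le_lineMass [IsProbabilityMeasure ν] (hv : v ≠ 0)
    (hhalf : 1 / 2 ≤ lineMass ν v) :
    ∃ u : Fin 2 → Plane, (∀ i, u i ≠ 0 ∧ 1 / 2 ≤ lineMass ν (u i)) ∧
      (u 0 = u 1 ∨ det2 (u 0) (u 1) ≠ 0) ∧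
      ∀ w ≠ 0, 1 / 2 ≤ lineMass ν w → ∃ j, det2 (u j) w = 0 := by
  by_cases hone : ∀ w ≠ 0, 1 / 2 ≤ lineMass ν w → det2 v w = 0
  · exact ⟨fun _ => v, fun _ => ⟨hv, hhalf⟩, .inl rfl, fun w hw h => ⟨0, hone w hw h⟩⟩
  · push Not at hone
    obtain ⟨v', hv', hhalf', hdet⟩ := hone
    refine ⟨![v, v'], Fin.forall_fin_two.2 ⟨⟨hv, hhalf⟩, hv', hhalf'⟩, .inr hdet,
      fun w _ hhalf'' => ?_⟩
    by_contra! hne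
    have hlt : (1 : ENNReal) < 1 / 2 + 1 / 2 + 1 / 2 := by
      rw [ENNReal.add_halves]
      exact ENNReal.lt_add_right (by simp) (by simp)
    refine (lineMass_add_add_le_one (ν := ν) hdet (hne 0) (hne 1)).not_gt (hlt.trans_le ?_)
    exact add_le_add (add_le_add hhalf hhalf') hhalf''

theorem exists_perm_mapsLine {g : SL2} {u : Fin 2 → Plane} (hu : ∀ i, u i ≠ 0)
    (hdet : u 0 = u 1 ∨ det2 (u 0) (u 1) ≠ 0)
    (h : ∀ i, ∃ j, det2 (linAct g (u j)) (u i) = 0) :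
    ∃ τ : Equiv.Perm (Fin 2), ∀ i, MapsLine g (u i) (u (τ i)) := by
  choose f hf using h
  rcases hdet with heq | hdet
  · have hconst (i j : Fin 2) : u i = u j := by fin_cases i <;> fin_cases j <;> simp [heq]
    exact ⟨1, fun i => .of_det2_eq_zero (hu _) (hconst (f i) i ▸ hf i)⟩
  · have hinj : f.Injective := by
      have hne : f 0 ≠ f 1 := fun h01 => hdet <|
        det2_eq_zero_trans (linAct_ne_zero g (hu (f 0))) (by rw [det2_swap, hf 0, neg_zero])
          (h01 ▸ hf 1)
      intro i j hij
      fin_cases i <;> fin_cases j <;> simp_all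
    let τ := Equiv.ofBijective f (Finite.injective_iff_bijective.1 hinj)
    refine ⟨τ.symm, fun i => .of_det2_eq_zero (hu _) ?_⟩
    have h := hf (τ.symm i)
    rwa [show f (τ.symm i) = i from τ.apply_symm_apply i] at h

section Stationary

variable {μ : Measure SL2} [IsProbabilityMeasure ν]

theorem lintegral_lineMass (hν : IsStationaryLaw μ ν) (v : Plane) :
    ∫⁻ h, lineMass ν (linAct h⁻¹ v) ∂μ = lineMass ν v := by
  have hsmul : Measurable fun p : SL2 × UnitCircle => p.1 • p.2 := by fun_prop
  have hline := (isClosed_setOf_det2_eq_zero v).measurableSet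
  conv_rhs => rw [lineMass, ← hν, Measure.map_apply hsmul hline,
    Measure.prod_apply (hsmul hline)]
  refine lintegral_congr fun h => congrArg ν ?_
  ext y
  exact det2_smul_eq_zero_iff.symm

variable [IsProbabilityMeasure μ]

theorem ae_half_le_lineMass (hν : IsStationaryLaw μ ν) (hv : v ≠ 0)
    (hhalf : 1 / 2 ≤ lineMass ν v) : ∀ᵐ h ∂μ, 1 / 2 ≤ lineMass ν (linAct h⁻¹ v) := by
  have hfin : ∫⁻ h, lineMass ν (linAct h⁻¹ v) ∂μ ≠ ⊤ := by
    rw [lintegral_lineMass hν]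
    exact measure_ne_top ν _
  have heq : (fun h => lineMass ν (linAct h⁻¹ v)) =ᵐ[μ] fun _ => lineMass ν v :=
    ae_eq_of_ae_le_of_lintegral_le
      (ae_of_all _ fun h => lineMass_le_of_half_le hv hhalf (linAct_ne_zero _ hv)) hfin
      aemeasurable_const (by simp [lintegral_lineMass hν])
  filter_upwards [heq] with h hh
  exact hhalf.trans_eq hh.symm

theorem lineMass_lt_half (hν : IsStationaryLaw μ ν) (hμ : ZariskiDense μ) (hv : v ≠ 0) :
    lineMass ν v < 1 / 2 := by
  by_contra! hhalf
  obtain ⟨u, hu, hdet, hmax⟩ := exists_pair_of_half_le_lineMass hv hhalf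
  refine hμ (isSolvable_closure_of_permutes_lines (u := u) (fun i => (hu i).1) fun g hg =>
    exists_perm_mapsLine (fun i => (hu i).1) hdet fun i => ?_)
  have hclosed : IsClosed {h : SL2 | ∃ j, det2 (linAct h (u j)) (u i) = 0} := by
    simp only [Set.ofPred_exists]
    exact isClosed_iUnion_of_finite fun j => isClosed_eq (by fun_prop) continuous_const
  refine mem_of_mem_measSupp hclosed ?_ hg
  filter_upwards [ae_half_le_lineMass hν (hu i).1 (hu i).2] with h hh
  obtain ⟨j, hj⟩ := hmax _ (linAct_ne_zero _ (hu i).1) hh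
  exact ⟨j, by rwa [← inv_inv h, det2_linAct_inv]⟩

end Stationary

theorem exists_measure_strip_lt [IsFiniteMeasure ν] {c : ENNReal} (h : lineMass ν w < c) :
    ∃ r > 0, ν {y | |det2 y w| ≤ r} < c := by
  have hclosed (r : ℝ) : IsClosed {y : UnitCircle | |det2 y w| ≤ r} :=
    isClosed_le (by fun_prop) continuous_const
  have hlim := tendsto_measure_biInter_gt (μ := ν) (a := (0 : ℝ))
    (s := fun r => {y : UnitCircle | |det2 y w| ≤ r})
    (fun r _ => (hclosed r).measurableSet.nullMeasurableSet)
    (fun r r' _ hr y hy => hy.trans hr) ⟨1, one_pos, measure_ne_top _ _⟩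
  have hinter : (⋂ r > (0 : ℝ), {y : UnitCircle | |det2 y w| ≤ r}) =
      {y : UnitCircle | det2 y w = 0} := by
    ext y
    simp only [Set.mem_iInter, Set.mem_ofPred_eq, ← abs_nonpos_iff]
    exact ⟨fun hy => le_of_forall_gt_imp_ge_of_dense hy, fun hy r hr => hy.trans hr.le⟩
  rw [hinter] at hlim
  obtain ⟨r, hr, hr0⟩ := ((hlim.eventually_lt_const h).and self_mem_nhdsWithin).exists
  exact ⟨r, hr0, hr⟩

theorem abs_det2_le_add_norm_sub (y : UnitCircle) (w w' : Plane) :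
    |det2 y w| ≤ |det2 y w'| + ‖w - w'‖ := by
  have h := abs_det2_le (y : Plane) (w - w')
  rw [norm_eq_of_mem_sphere, one_mul, det2_sub_right] at h
  linarith [abs_sub_abs_le_abs_sub (det2 y w) (det2 y w')]

theorem exists_forall_measureReal_strip_le [IsFiniteMeasure ν]
    (h : ∀ w : UnitCircle, lineMass ν w < 1 / 2) :
    ∃ r > 0, ∃ p < (1 / 2 : ℝ), ∀ w : UnitCircle, ν.real {y | |det2 y w| ≤ r} ≤ p := by
  suffices ∃ r > 0, ∃ p < (1 / 2 : ℝ), ∀ w ∈ Set.univ,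
      ν.real {y : UnitCircle | |det2 y (w : UnitCircle)| ≤ r} ≤ p by simpa using this
  refine isCompact_univ.induction_on (p := fun s => ∃ r > 0, ∃ p < (1 / 2 : ℝ), ∀ w ∈ s,
    ν.real {y : UnitCircle | |det2 y (w : UnitCircle)| ≤ r} ≤ p)
    ⟨1, one_pos, 0, by norm_num, by simp⟩ ?_ ?_ fun w _ => ?_
  · rintro s t hst ⟨r, hr, p, hp, ht⟩
    exact ⟨r, hr, p, hp, fun w hw => ht w (hst hw)⟩
  · rintro s t ⟨r, hr, p, hp, hs⟩ ⟨r', hr', p', hp', ht⟩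
    refine ⟨min r r', lt_min hr hr', max p p', max_lt hp hp', ?_⟩
    rintro w (hw | hw)
    · exact (measureReal_mono fun y hy => hy.trans (min_le_left r r')).trans
        ((hs w hw).trans (le_max_left p p'))
    · exact (measureReal_mono fun y hy => hy.trans (min_le_right r r')).trans
        ((ht w hw).trans (le_max_right p p'))
  · obtain ⟨r, hr, hlt⟩ := exists_measure_strip_lt (h w)
    refine ⟨Metric.ball w (r / 2),
      mem_nhdsWithin_of_mem_nhds (Metric.ball_mem_nhds w (by positivity)),
      r / 2, by positivity, ν.real {y | |det2 y w| ≤ r}, ?_, fun w' hw' =>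
      measureReal_mono fun y (hy : |det2 y w'| ≤ r / 2) => ?_⟩
    · simpa [measureReal_def] using
        (ENNReal.toReal_lt_toReal (measure_ne_top ν _) (by simp)).2 hlt
    · have hdist : ‖(w : Plane) - w'‖ < r / 2 := by
        rw [← dist_eq_norm]
        exact Metric.mem_ball'.1 hw'
      change |det2 y w| ≤ r
      linarith [abs_det2_le_add_norm_sub y w w']

end LineMass

/-! ### Positivity of the drift -/

/- In the hyperbolic plane `SO(2) \ SL₂(ℝ)`, the class of `m` is the midpoint of the classes of `1`
and `k`. -/
theorem exists_norm_sq_mul_norm_sq_eq (k : SL2) : ∃ m : SL2, ∃ z : Plane, ‖z‖ = 1 ∧ ∀ v,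
    ‖v‖ ^ 2 * ‖linAct k v‖ ^ 2 =
      (‖linAct m v‖ ^ 2) ^ 2 + ((opNorm k - (opNorm k)⁻¹) * (det2 v z * inner ℝ v z)) ^ 2 := by
  obtain ⟨z, hz, hk⟩ := exists_norm_sq_linAct_eq k
  have hpos := opNorm_pos k
  have hz2 := norm_sq_eq z
  rw [hz, one_pow] at hz2
  have hsqrt : √(opNorm k) ^ 2 = opNorm k := Real.sq_sqrt hpos.le
  have hsqrt0 : √(opNorm k) ≠ 0 := (Real.sqrt_pos.2 hpos).ne'
  let m : SL2 := ⟨!![√(opNorm k) * z 0, √(opNorm k) * z 1;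
    -(√(opNorm k))⁻¹ * z 1, (√(opNorm k))⁻¹ * z 0], by
      rw [Matrix.det_fin_two_of]; field_simp; linear_combination -hz2⟩
  have hm (v : Plane) :
      ‖linAct m v‖ ^ 2 = opNorm k * inner ℝ v z ^ 2 + (opNorm k)⁻¹ * det2 v z ^ 2 := by
    have h0 : linAct m v 0 = √(opNorm k) * inner ℝ v z := by
      rw [linAct_apply_zero, inner_eq]; simp [m]; ring
    have h1 : linAct m v 1 = -(√(opNorm k))⁻¹ * det2 v z := by
      rw [linAct_apply_one, det2]; simp [m]; ring
    rw [norm_sq_eq, h0, h1, mul_pow, mul_pow, neg_sq, inv_pow, hsqrt]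
  refine ⟨m, z, hz, fun v => ?_⟩
  have hv := det2_sq_add_inner_sq v z
  rw [hz, mul_one] at hv
  rw [hm, hk, ← hv]
  field_simp
  ring

theorem exists_two_mul_log_norm_le {k : SL2} (hk : 1 < opNorm k) :
    ∃ m : SL2, ∃ z ≠ 0, ∀ v ≠ 0,
      2 * Real.log ‖linAct m v‖ ≤ Real.log ‖v‖ + Real.log ‖linAct k v‖ ∧
      (det2 v z ≠ 0 → det2 v (rot90 z) ≠ 0 →
        2 * Real.log ‖linAct m v‖ < Real.log ‖v‖ + Real.log ‖linAct k v‖) := by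
  obtain ⟨m, z, hz, hmid⟩ := exists_norm_sq_mul_norm_sq_eq k
  have hne : opNorm k - (opNorm k)⁻¹ ≠ 0 := (sub_pos.2 ((inv_lt_one_of_one_lt₀ hk).trans hk)).ne'
  refine ⟨m, z, norm_ne_zero_iff.1 (by simp [hz]), fun v hv => ?_⟩
  have := norm_pos_iff.2 hv
  have := norm_pos_iff.2 (linAct_ne_zero k hv)
  have := norm_pos_iff.2 (linAct_ne_zero m hv)
  have hprod : Real.log (‖v‖ ^ 2 * ‖linAct k v‖ ^ 2)
      = 2 * (Real.log ‖v‖ + Real.log ‖linAct k v‖) := by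
    rw [Real.log_mul (by positivity) (by positivity), Real.log_pow, Real.log_pow]
    push_cast
    ring
  have hsq : Real.log ((‖linAct m v‖ ^ 2) ^ 2) = 2 * (2 * Real.log ‖linAct m v‖) := by
    rw [Real.log_pow, Real.log_pow]
    push_cast
    ring
  constructor
  · have := Real.log_le_log (by positivity)
      ((le_add_of_nonneg_right (sq_nonneg _)).trans_eq (hmid v).symm)
    linarith
  · intro hz hrot
    rw [← inner_eq_det2_rot90] at hrot
    have := Real.log_lt_log (by positivity)
      ((lt_add_of_pos_right _ (by positivity)).trans_eq (hmid v).symm)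
    linarith

instance : LocallyCompactSpace SL2 :=
  have : LocallyCompactSpace (Matrix (Fin 2) (Fin 2) ℝ) :=
    inferInstanceAs (LocallyCompactSpace (Fin 2 → Fin 2 → ℝ))
  (isClosed_eq continuous_id.matrix_det continuous_const).isClosedEmbedding_subtypeVal
    |>.locallyCompactSpace

theorem integral_lt_integral_of_ae_le_of_not_ae_le {α : Type*} [MeasurableSpace α] {μ : Measure α}
    {f g : α → ℝ} (hf : Integrable f μ) (hg : Integrable g μ) (hle : ∀ᵐ x ∂μ, f x ≤ g x)
    (hlt : ¬ ∀ᵐ x ∂μ, g x ≤ f x) : ∫ x, f x ∂μ < ∫ x, g x ∂μ := by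
  refine (integral_mono_ae hf hg hle).lt_of_ne fun heq => hlt ?_
  filter_upwards [(integral_eq_iff_of_ae_le hf hg hle).1 heq] with x hx using hx.ge

section MeanLogNorm

variable {ν : Measure UnitCircle}

/-- The mean of `log ‖g y‖` over a law `ν` of the unit vector `y`. -/
def meanLogNorm (ν : Measure UnitCircle) (g : SL2) : ℝ := ∫ y, logNorm g y ∂ν

theorem integrable_logNorm_smul [IsFiniteMeasure ν] (g h : SL2) :
    Integrable (fun y : UnitCircle => logNorm g (h • y)) ν :=
  .of_bound (Continuous.aestronglyMeasurable (by fun_prop)) _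
    (ae_of_all _ fun y => abs_logNorm_le g (h • y))

theorem integrable_logNorm [IsFiniteMeasure ν] (g : SL2) : Integrable (logNorm g) ν := by
  simpa only [one_smul] using integrable_logNorm_smul (ν := ν) g 1

theorem continuous_meanLogNorm [IsFiniteMeasure ν] : Continuous (meanLogNorm ν) := by
  have h := continuous_parametric_integral_of_continuous (μ := ν) (f := logNorm)
    continuous_logNorm isCompact_univ
  rwa [Measure.restrict_univ] at h

theorem abs_meanLogNorm_le [IsProbabilityMeasure ν] (g : SL2) :
    |meanLogNorm ν g| ≤ Real.log (opNorm g) := by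
  simpa [meanLogNorm] using norm_integral_le_of_norm_le_const (μ := ν) (f := logNorm g)
    (ae_of_all _ (abs_logNorm_le g))

theorem le_meanLogNorm [IsProbabilityMeasure ν] {r p : ℝ} (hr : 0 < r) (hr1 : r ≤ 1)
    (h : ∀ w : UnitCircle, ν.real {y | |det2 y w| ≤ r} ≤ p) (g : SL2) :
    (1 - 2 * p) * Real.log (opNorm g) + Real.log r ≤ meanLogNorm ν g := by
  obtain ⟨w, hw, hgw⟩ := exists_opNorm_mul_abs_det2_le g
  set L := Real.log (opNorm g) with hL
  have hL0 : 0 ≤ L := Real.log_nonneg (one_le_opNorm g)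
  let strip : Set UnitCircle := {y | |det2 y w| ≤ r}
  have hstrip : MeasurableSet strip := (isClosed_le (by fun_prop) continuous_const).measurableSet
  have hmass : ν.real strip ≤ p := h ⟨w, mem_sphere_zero_iff_norm.2 hw⟩
  have hpoint (y : UnitCircle) :
      L + Real.log r - strip.indicator (fun _ => 2 * L) y ≤ logNorm g y := by
    by_cases hy : y ∈ strip
    · rw [Set.indicator_of_mem hy]
      linarith [(abs_le.1 (abs_logNorm_le g y)).1, Real.log_nonpos hr.le hr1]
    · rw [Set.indicator_of_notMem hy, sub_zero, hL, ← Real.log_mul (opNorm_pos g).ne' hr.ne']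
      refine Real.log_le_log (mul_pos (opNorm_pos g) hr) (le_trans ?_ (hgw y))
      exact mul_le_mul_of_nonneg_left (not_le.1 hy).le (opNorm_nonneg g)
  have hind : Integrable (strip.indicator fun _ => 2 * L) ν := (integrable_const _).indicator hstrip
  calc (1 - 2 * p) * L + Real.log r ≤ L + Real.log r - ν.real strip * (2 * L) := by nlinarith
    _ = ∫ y, (L + Real.log r - strip.indicator (fun _ => 2 * L) y) ∂ν := by
        rw [integral_sub (integrable_const _) hind, integral_indicator_const _ hstrip]
        simp
    _ ≤ meanLogNorm ν g :=
        integral_mono ((integrable_const _).sub hind) (integrable_logNorm g) hpoint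

variable [IsProbabilityMeasure ν]

theorem exists_forall_meanLogNorm_le (h : ∀ v ≠ 0, lineMass ν v < 1 / 2) :
    ∃ g₀, ∀ g, meanLogNorm ν g₀ ≤ meanLogNorm ν g := by
  obtain ⟨r, hr, p, hp, hstrip⟩ :=
    exists_forall_measureReal_strip_le (ν := ν) fun w => h w (ne_zero_of_mem_unit_sphere w)
  have hlower := le_meanLogNorm (ν := ν) (lt_min hr one_pos) (min_le_right r 1) fun w =>
    (measureReal_mono fun y hy => le_trans hy (min_le_left r 1)).trans (hstrip w)
  set R := Real.exp ((meanLogNorm ν 1 - Real.log (min r 1)) / (1 - 2 * p))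
  have hsublevel {g : SL2} (hg : meanLogNorm ν g ≤ meanLogNorm ν 1) : opNorm g ≤ R := by
    rw [← Real.log_le_iff_le_exp (opNorm_pos g), le_div_iff₀ (by linarith)]
    linarith [hlower g]
  obtain ⟨g₀, -, hmin⟩ := (isCompact_setOf_opNorm_le R).exists_isMinOn
    ⟨1, hsublevel le_rfl⟩ (continuous_meanLogNorm (ν := ν)).continuousOn
  refine ⟨g₀, fun g => ?_⟩
  rcases le_total (meanLogNorm ν g) (meanLogNorm ν 1) with hg | hg
  · exact hmin (hsublevel hg)
  · exact (hmin (hsublevel le_rfl)).trans hg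

theorem exists_two_mul_meanLogNorm_lt (h : ∀ v ≠ 0, lineMass ν v < 1 / 2) {k : SL2}
    (hk : 1 < opNorm k) (g₀ : SL2) :
    ∃ m, 2 * meanLogNorm ν (m * g₀) < meanLogNorm ν g₀ + meanLogNorm ν (k * g₀) := by
  obtain ⟨m, z, hz, hmid⟩ := exists_two_mul_log_norm_le hk
  have hrot : rot90 z ≠ 0 := norm_ne_zero_iff.1 (by rwa [norm_rot90, norm_ne_zero_iff])
  have hne (y : UnitCircle) : linAct g₀ y ≠ 0 := linAct_ne_zero g₀ (ne_zero_of_mem_unit_sphere y)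
  refine ⟨m, ?_⟩
  simp only [meanLogNorm]
  rw [← integral_const_mul, ← integral_add (integrable_logNorm g₀) (integrable_logNorm (k * g₀))]
  refine integral_lt_integral_of_ae_le_of_not_ae_le
    ((integrable_logNorm _).const_mul 2) ((integrable_logNorm _).add (integrable_logNorm _))
    (ae_of_all _ fun y => ?_) fun hge =>
      not_ae_det2_eq_zero_or h (linAct_ne_zero g₀⁻¹ hz) (linAct_ne_zero g₀⁻¹ hrot)
        (hge.mono fun y hy => ?_)
  · simpa only [logNorm, linAct_mul] using (hmid _ (hne y)).1
  · rw [← det2_linAct_inv, ← det2_linAct_inv, inv_inv]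
    by_contra! hoff
    refine hy.not_gt ?_
    simpa only [logNorm, linAct_mul] using (hmid _ (hne y)).2 hoff.1 hoff.2

section Stationary

variable {μ : Measure SL2}

theorem integrable_meanLogNorm (hlog : Integrable (fun g => Real.log (opNorm g)) μ) :
    Integrable (meanLogNorm ν) μ :=
  hlog.mono' continuous_meanLogNorm.aestronglyMeasurable (ae_of_all _ abs_meanLogNorm_le)

variable [IsProbabilityMeasure μ]

theorem integrable_prod_logNorm_smul (g : SL2) :
    Integrable (fun p : SL2 × UnitCircle => logNorm g (p.1 • p.2)) (μ.prod ν) :=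
  .of_bound (Continuous.aestronglyMeasurable (by fun_prop)) _
    (ae_of_all _ fun p => abs_logNorm_le g (p.1 • p.2))

theorem meanLogNorm_mul (g h : SL2) :
    meanLogNorm ν (g * h) = (∫ y, logNorm g (h • y) ∂ν) + meanLogNorm ν h := by
  rw [meanLogNorm, meanLogNorm, ← integral_add (integrable_logNorm_smul g h) (integrable_logNorm h)]
  exact integral_congr_ae (ae_of_all _ (isCocycle_logNorm g h))

theorem integrable_meanLogNorm_mul (hlog : Integrable (fun g => Real.log (opNorm g)) μ) (g : SL2) :
    Integrable (fun h => meanLogNorm ν (g * h)) μ := by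
  simp only [meanLogNorm_mul]
  exact (integrable_prod_logNorm_smul g).integral_prod_left.add (integrable_meanLogNorm hlog)

theorem integral_meanLogNorm_mul (hν : IsStationaryLaw μ ν)
    (hlog : Integrable (fun g => Real.log (opNorm g)) μ) (g : SL2) :
    ∫ h, meanLogNorm ν (g * h) ∂μ = meanLogNorm ν g + ∫ h, meanLogNorm ν h ∂μ := by
  have hstat : ∫ h, ∫ y, logNorm g (h • y) ∂ν ∂μ = meanLogNorm ν g := by
    rw [← integral_prod _ (integrable_prod_logNorm_smul g), meanLogNorm]
    conv_rhs => rw [← hν]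
    rw [integral_map (by fun_prop) (Continuous.aestronglyMeasurable (by fun_prop))]
  simp only [meanLogNorm_mul]
  rw [integral_add (integrable_prod_logNorm_smul g).integral_prod_left
    (integrable_meanLogNorm hlog), hstat]

/- `meanLogNorm ν` attains its minimum and is strictly convex along `SO(2) \ SL₂(ℝ)`. Without drift,
`g₀ * h` would be a minimiser together with `g₀` for every `h` in the support of `μ`, so that the
conjugate of the support by `g₀` would consist of rotations. -/
theorem integral_meanLogNorm_pos (hν : IsStationaryLaw μ ν) (hμ : ZariskiDense μ)
    (hlog : Integrable (fun g => Real.log (opNorm g)) μ) : 0 < ∫ g, meanLogNorm ν g ∂μ := by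
  by_contra! hdrift
  have hlines (v : Plane) (hv : v ≠ 0) : lineMass ν v < 1 / 2 := lineMass_lt_half hν hμ hv
  obtain ⟨g₀, hmin⟩ := exists_forall_meanLogNorm_le hlines
  have hae : ∀ᵐ h ∂μ, meanLogNorm ν (g₀ * h) = meanLogNorm ν g₀ := by
    by_contra hne
    have hlt := integral_lt_integral_of_ae_le_of_not_ae_le
      (integrable_const (meanLogNorm ν g₀)) (integrable_meanLogNorm_mul hlog g₀)
      (ae_of_all μ fun h => hmin (g₀ * h))
      fun hge => hne (hge.mono fun h hh => hh.antisymm (hmin _))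
    rw [integral_meanLogNorm_mul hν hlog, integral_const, probReal_univ, one_smul] at hlt
    linarith
  refine hμ (isSolvable_closure_of_opNorm_conj_eq_one g₀ fun h hh => ?_)
  have hclosed : IsClosed {h : SL2 | meanLogNorm ν (g₀ * h) = meanLogNorm ν g₀} :=
    isClosed_eq (continuous_meanLogNorm.comp (continuous_const_mul g₀)) continuous_const
  have heq : meanLogNorm ν (g₀ * h) = meanLogNorm ν g₀ := mem_of_mem_measSupp hclosed hae hh
  by_contra hne
  obtain ⟨m, hm⟩ := exists_two_mul_meanLogNorm_lt hlines ((one_le_opNorm _).lt_of_ne' hne) g₀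
  rw [inv_mul_cancel_right, heq] at hm
  linarith [hmin (m * g₀)]

end Stationary

end MeanLogNorm

theorem exists_forall_one_le_integral_logNorm {μ : Measure SL2} [IsProbabilityMeasure μ] {ε Λ : ℝ}
    (hε : 0 < ε) (hmom : MomentGrowth μ ε Λ) (hμ : ZariskiDense μ) :
    ∃ N, ∀ y, 1 ≤ ∫ g, logNorm g y ∂convPow μ (N + 1) := by
  have hlog : Integrable (fun g => Real.log (opNorm g)) μ := by
    simpa only [convPow_one] using hmom.integrable_log_opNorm hε 1
  refine exists_forall_one_le_integral_cocycle continuous_logNorm abs_logNorm_le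
    (hmom.integrable_log_opNorm hε) isCocycle_logNorm fun ν _ hν => ?_
  have hint : Integrable (fun p : SL2 × UnitCircle => logNorm p.1 p.2) (μ.prod ν) :=
    (hlog.comp_fst ν).mono' continuous_logNorm.aestronglyMeasurable
      (ae_of_all _ fun p => abs_logNorm_le p.1 p.2)
  rw [← integral_integral_swap hint]
  exact integral_meanLogNorm_pos hν hμ hlog

/-! ### Exponential contraction -/

theorem exp_le_one_add_add_sq_mul_exp_abs (x : ℝ) :
    Real.exp x ≤ 1 + x + x ^ 2 * Real.exp |x| := by
  have hsub : Real.exp x - 1 ≤ x * Real.exp x := by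
    have hone : Real.exp x * Real.exp (-x) = 1 := by
      rw [← Real.exp_add, add_neg_cancel, Real.exp_zero]
    nlinarith [Real.add_one_le_exp (-x), Real.exp_pos x]
  have hlow := Real.add_one_le_exp x
  rcases le_total 0 x with h | h
  · rw [abs_of_nonneg h]
    nlinarith
  · nlinarith [sq_nonneg x, Real.one_le_exp (abs_nonneg x)]

theorem exp_neg_mul_le_of_abs_le {δ ε x z : ℝ} (hδ : 0 ≤ δ) (hε : 0 < ε) (hδε : δ ≤ ε / 2)
    (hxz : |x| ≤ z) :
    Real.exp (-(δ * x)) ≤ 1 - δ * x + δ ^ 2 * (8 / ε ^ 2 * Real.exp (ε * z)) := by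
  have hz : 0 ≤ z := (abs_nonneg x).trans hxz
  have hexp : Real.exp |(-(δ * x))| ≤ Real.exp (ε / 2 * z) := by
    rw [abs_neg, abs_mul, abs_of_nonneg hδ]
    gcongr
  have hsq : x ^ 2 ≤ 8 / ε ^ 2 * Real.exp (ε / 2 * z) := by
    have := Real.pow_div_factorial_le_exp (ε / 2 * z) (by positivity) 2
    calc x ^ 2 ≤ z ^ 2 := sq_le_sq' (abs_le.1 hxz).1 (abs_le.1 hxz).2
      _ = 8 / ε ^ 2 * ((ε / 2 * z) ^ 2 / (Nat.factorial 2 : ℕ)) := by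
        rw [Nat.factorial_two]; push_cast; field_simp; ring
      _ ≤ 8 / ε ^ 2 * Real.exp (ε / 2 * z) := by gcongr
  calc Real.exp (-(δ * x)) ≤ 1 + -(δ * x) + (-(δ * x)) ^ 2 * Real.exp |(-(δ * x))| :=
        exp_le_one_add_add_sq_mul_exp_abs _
    _ = 1 - δ * x + δ ^ 2 * (x ^ 2 * Real.exp |(-(δ * x))|) := by ring
    _ ≤ 1 - δ * x + δ ^ 2 * ((8 / ε ^ 2 * Real.exp (ε / 2 * z)) * Real.exp (ε / 2 * z)) := by gcongr
    _ = 1 - δ * x + δ ^ 2 * (8 / ε ^ 2 * Real.exp (ε * z)) := by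
        rw [mul_assoc, ← Real.exp_add]; ring_nf

theorem eventually_forall_lintegral_exp_neg_mul_le {ι Ω : Type*} [MeasurableSpace Ω]
    {ρ : Measure Ω} [IsProbabilityMeasure ρ] {X : ι → Ω → ℝ} {Z : Ω → ℝ} {ε : ℝ} (hε : 0 < ε)
    (hX : ∀ i, AEStronglyMeasurable (X i) ρ) (hXZ : ∀ i ω, |X i ω| ≤ Z ω)
    (hZ : Integrable (fun ω => Real.exp (ε * Z ω)) ρ) (hmean : ∀ i, 1 ≤ ∫ ω, X i ω ∂ρ) :
    ∀ᶠ δ in nhdsWithin 0 (Set.Ioi 0), ∀ i,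
      ∫⁻ ω, ENNReal.ofReal (Real.exp (-(δ * X i ω))) ∂ρ ≤ ENNReal.ofReal (Real.exp (-(δ / 2))) := by
  set K := 8 / ε ^ 2 * ∫ ω, Real.exp (ε * Z ω) ∂ρ
  have : 0 ≤ K := mul_nonneg (by positivity) (integral_nonneg fun ω => (Real.exp_pos _).le)
  have hXint (i : ι) : Integrable (X i) ρ := by
    refine (hZ.div_const ε).mono' (hX i) (ae_of_all _ fun ω => (hXZ i ω).trans ?_)
    rw [le_div_iff₀' hε]
    linarith [Real.add_one_le_exp (ε * Z ω)]
  filter_upwards [Ioc_mem_nhdsGT (by positivity : 0 < min (ε / 2) (1 / (2 * (K + 1))))]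
    with δ ⟨hδ, hδmin⟩ i
  have hδK : δ * (2 * (K + 1)) ≤ 1 :=
    (le_div_iff₀ (by positivity)).1 (hδmin.trans (min_le_right _ _))
  have hpt (ω : Ω) := exp_neg_mul_le_of_abs_le hδ.le hε (hδmin.trans (min_le_left _ _)) (hXZ i ω)
  have hlin : Integrable (fun ω => 1 - δ * X i ω) ρ :=
    (integrable_const _).sub ((hXint i).const_mul δ)
  have hquad : Integrable (fun ω => δ ^ 2 * (8 / ε ^ 2 * Real.exp (ε * Z ω))) ρ :=
    (hZ.const_mul _).const_mul _
  calc ∫⁻ ω, ENNReal.ofReal (Real.exp (-(δ * X i ω))) ∂ρ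
      ≤ ∫⁻ ω, ENNReal.ofReal (1 - δ * X i ω + δ ^ 2 * (8 / ε ^ 2 * Real.exp (ε * Z ω))) ∂ρ :=
        lintegral_mono fun ω => ENNReal.ofReal_le_ofReal (hpt ω)
    _ = ENNReal.ofReal (1 - δ * ∫ ω, X i ω ∂ρ + δ ^ 2 * K) := by
        rw [← ofReal_integral_eq_lintegral_ofReal, integral_add hlin hquad,
          integral_sub (integrable_const _) ((hXint i).const_mul δ), integral_const_mul,
          integral_const_mul, integral_const_mul, integral_const, probReal_univ, one_smul]
        exacts [hlin.add hquad, ae_of_all _ fun ω => (Real.exp_pos _).le.trans (hpt ω)]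
    _ ≤ ENNReal.ofReal (Real.exp (-(δ / 2))) := by
        refine ENNReal.ofReal_le_ofReal ?_
        nlinarith [Real.add_one_le_exp (-(δ / 2)), hmean i]

section LaplaceDecay

variable {G X : Type*} [Monoid G] [MeasurableSpace G] {μ : Measure G}
  {σ : G → X → ℝ} {δ Λ ℓ : ℝ}

/-- Exponential decay, uniform in the starting point, of the Laplace transform at `δ` of the
cocycle `σ` along the random walk: a quantitative way of saying that `σ` drifts to `+∞`. -/
def LaplaceDecay (μ : Measure G) (σ : G → X → ℝ) (δ C ℓ : ℝ) : Prop :=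
  ∀ (n : ℕ) x, ∫⁻ g, ENNReal.ofReal (Real.exp (-(δ * σ g x))) ∂convPow μ n
    ≤ ENNReal.ofReal (C * Real.exp (-(ℓ * n)))

theorem LaplaceDecay.mono {C C' ℓ' : ℝ} (h : LaplaceDecay μ σ δ C ℓ) (hC' : 0 ≤ C') (hC : C ≤ C')
    (hℓ : ℓ' ≤ ℓ) : LaplaceDecay μ σ δ C' ℓ' := fun n x =>
  (h n x).trans (ENNReal.ofReal_le_ofReal (by gcongr))

variable [MulAction G X] [MeasurableMul₂ G] [IsProbabilityMeasure μ]

theorem lintegral_exp_neg_mul_convPow_add_le (hσ : IsCocycle σ)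
    (hmeas : ∀ x, Measurable fun g => σ g x) {m : ℕ} {A : ENNReal}
    (hA : ∀ x, ∫⁻ g, ENNReal.ofReal (Real.exp (-(δ * σ g x))) ∂convPow μ m ≤ A) (n : ℕ) (x : X) :
    ∫⁻ g, ENNReal.ofReal (Real.exp (-(δ * σ g x))) ∂convPow μ (m + n)
      ≤ A * ∫⁻ g, ENNReal.ofReal (Real.exp (-(δ * σ g x))) ∂convPow μ n := by
  have hm (x : X) : Measurable fun g => ENNReal.ofReal (Real.exp (-(δ * σ g x))) := by
    have := hmeas x
    fun_prop
  rw [lintegral_convPow_add m n (hm x), ← lintegral_const_mul _ (hm x)]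
  refine lintegral_mono fun h => ?_
  have hsplit (g : G) : ENNReal.ofReal (Real.exp (-(δ * σ (g * h) x)))
      = ENNReal.ofReal (Real.exp (-(δ * σ g (h • x)))) *
          ENNReal.ofReal (Real.exp (-(δ * σ h x))) := by
    rw [← ENNReal.ofReal_mul (Real.exp_nonneg _), ← Real.exp_add, hσ g h x]
    ring_nf
  simp only [hsplit]
  rw [lintegral_mul_const _ (hm (h • x))]
  gcongr
  exact hA _

theorem laplaceDecay_of_step (hσ : IsCocycle σ) (hmeas : ∀ x, Measurable fun g => σ g x)
    (hℓ : 0 ≤ ℓ) (hΛ : 0 ≤ Λ) {N : ℕ}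
    (hstep : ∀ x, ∫⁻ g, ENNReal.ofReal (Real.exp (-(δ * σ g x))) ∂convPow μ (N + 1)
      ≤ ENNReal.ofReal (Real.exp (-(ℓ * (N + 1 : ℕ)))))
    (hgrowth : ∀ (n : ℕ) x, ∫⁻ g, ENNReal.ofReal (Real.exp (-(δ * σ g x))) ∂convPow μ n
      ≤ ENNReal.ofReal (Real.exp (Λ * n))) :
    LaplaceDecay μ σ δ (Real.exp ((Λ + ℓ) * (N + 1 : ℕ))) ℓ := by
  intro n
  induction n using Nat.strong_induction_on with
  | _ n ih =>
    intro x
    rcases lt_or_ge n (N + 1) with hn | hn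
    · refine (hgrowth n x).trans (ENNReal.ofReal_le_ofReal ?_)
      rw [← Real.exp_add]
      have hcast : (n : ℝ) ≤ (N + 1 : ℕ) := by exact_mod_cast hn.le
      exact Real.exp_le_exp.2 (by nlinarith)
    · obtain ⟨k, rfl⟩ := Nat.exists_eq_add_of_le hn
      calc ∫⁻ g, ENNReal.ofReal (Real.exp (-(δ * σ g x))) ∂convPow μ (N + 1 + k)
          ≤ ENNReal.ofReal (Real.exp (-(ℓ * (N + 1 : ℕ)))) *
              ENNReal.ofReal (Real.exp ((Λ + ℓ) * (N + 1 : ℕ)) * Real.exp (-(ℓ * k))) :=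
            (lintegral_exp_neg_mul_convPow_add_le hσ hmeas hstep k x).trans
              (by gcongr; exact ih k (by omega) x)
        _ = ENNReal.ofReal (Real.exp ((Λ + ℓ) * (N + 1 : ℕ)) *
              Real.exp (-(ℓ * (N + 1 + k : ℕ)))) := by
            rw [← ENNReal.ofReal_mul (Real.exp_nonneg _), mul_left_comm, ← Real.exp_add]
            push_cast
            ring_nf

end LaplaceDecay

section ContractionSL2

theorem measurable_logNorm (y : UnitCircle) : Measurable fun g => logNorm g y :=
  (by fun_prop : Continuous fun g => logNorm g y).measurable

variable {μ : Measure SL2} {ε Λ : ℝ}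

theorem ZariskiDense.map_inv (hμ : ZariskiDense μ) : ZariskiDense (μ.map (·⁻¹)) := by
  intro hsolv
  have hle : Subgroup.closure (measSupp μ) ≤ Subgroup.closure (measSupp (μ.map (·⁻¹))) := by
    refine (Subgroup.closure_le _).2 fun g hg => inv_mem_iff.1 (Subgroup.subset_closure ?_)
    intro U hU hgU
    rw [Measure.map_apply measurable_inv hU.measurableSet]
    exact hg _ (hU.preimage continuous_inv) hgU
  have : Group.IsSolvable (Subgroup.closure (measSupp (μ.map (·⁻¹)))) := hsolv
  exact hμ (Group.isSolvable_of_isSolvable_injective (Subgroup.inclusion_injective hle))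

variable [IsProbabilityMeasure μ]

theorem eventually_exists_laplaceDecay_logNorm (hε : 0 < ε) (hΛ : 0 ≤ Λ)
    (hmom : MomentGrowth μ ε Λ) (hμ : ZariskiDense μ) :
    ∀ᶠ δ in nhdsWithin 0 (Set.Ioi 0), ∃ C > 0, ∃ ℓ > 0, LaplaceDecay μ logNorm δ C ℓ := by
  obtain ⟨N, hN⟩ := exists_forall_one_le_integral_logNorm hε hmom hμ
  have hexp (g : SL2) : Real.exp (ε * Real.log (opNorm g)) = opNorm g ^ ε := by
    rw [Real.rpow_def_of_pos (opNorm_pos g), mul_comm]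
  have hint : Integrable (fun g => Real.exp (ε * Real.log (opNorm g))) (convPow μ (N + 1)) := by
    simp only [hexp]
    exact hmom.integrable_opNorm_rpow (N + 1)
  filter_upwards [Ioc_mem_nhdsGT hε, eventually_forall_lintegral_exp_neg_mul_le hε
    (fun y => (measurable_logNorm y).aestronglyMeasurable) (fun y g => abs_logNorm_le g y)
    hint hN] with δ ⟨hδ, hδε⟩ hstep
  refine ⟨_, Real.exp_pos _, δ / 2 / (N + 1 : ℕ), by positivity,
    laplaceDecay_of_step (N := N) isCocycle_logNorm measurable_logNorm (by positivity) hΛ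
      (fun y => ?_) fun n y => ?_⟩
  · rw [div_mul_cancel₀ _ (by positivity)]
    exact hstep y
  · refine (lintegral_mono fun g => ENNReal.ofReal_le_ofReal ?_).trans (hmom n)
    rw [← hexp]
    refine Real.exp_le_exp.2 ?_
    have hlow := neg_le_of_abs_le (abs_logNorm_le g y)
    have hnonneg := Real.log_nonneg (one_le_opNorm g)
    nlinarith

theorem exists_laplaceDecay_logNorm_and_inv (hε : 0 < ε) (hΛ : 0 ≤ Λ) (hmom : MomentGrowth μ ε Λ)
    (hμ : ZariskiDense μ) : ∃ δ > 0, ∃ C > 0, ∃ ℓ > 0,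
      LaplaceDecay μ logNorm δ C ℓ ∧ LaplaceDecay (μ.map (·⁻¹)) logNorm δ C ℓ := by
  have := Measure.isProbabilityMeasure_map (μ := μ) measurable_inv.aemeasurable
  obtain ⟨δ, ⟨C, hC, ℓ, hℓ, hdecay⟩, ⟨C', -, ℓ', hℓ', hdecay'⟩, hδ⟩ :=
    ((eventually_exists_laplaceDecay_logNorm hε hΛ hmom hμ).and
      ((eventually_exists_laplaceDecay_logNorm hε hΛ hmom.map_inv hμ.map_inv).and
        self_mem_nhdsWithin)).exists
  have hC' : 0 < max C C' := lt_max_of_lt_left hC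
  exact ⟨δ, hδ, max C C', hC', min ℓ ℓ', lt_min hℓ hℓ',
    hdecay.mono hC'.le (le_max_left _ _) (min_le_left _ _),
    hdecay'.mono hC'.le (le_max_right _ _) (min_le_right _ _)⟩

end ContractionSL2

/-! ### Deviations and the renewal bound -/

theorem tsum_ofReal_mul_exp_neg_mul {ℓ : ℝ} (hℓ : 0 < ℓ) (A : ℝ) :
    ∑' n : ℕ, ENNReal.ofReal (A * Real.exp (-(ℓ * n)))
      = ENNReal.ofReal (A * (1 - Real.exp (-ℓ))⁻¹) := by
  have hexp (n : ℕ) : Real.exp (-(ℓ * n)) = Real.exp (-ℓ) ^ n := by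
    rw [← Real.exp_nat_mul]
    ring_nf
  have hlt : Real.exp (-ℓ) < 1 := Real.exp_lt_one_iff.2 (neg_neg_of_pos hℓ)
  have hgeom := hasSum_geometric_of_lt_one (Real.exp_nonneg _) hlt
  simp only [hexp, ENNReal.ofReal_mul' (pow_nonneg (Real.exp_nonneg (-ℓ)) _),
    ENNReal.ofReal_mul' (inv_nonneg.2 (sub_pos.2 hlt).le)]
  rw [ENNReal.tsum_mul_left, ← ENNReal.ofReal_tsum_of_nonneg (fun n => by positivity)
    hgeom.summable, hgeom.tsum_eq]

theorem tsum_le_of_tail_le_exp {ℓ A : ℝ} (hℓ : 0 < ℓ) {f : ℕ → ENNReal} {S : ENNReal} {L : ℕ}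
    (hinit : ∑ n ∈ Finset.range L, f n ≤ S)
    (htail : ∀ n ≥ L, f n ≤ ENNReal.ofReal (A * Real.exp (-(ℓ * n)))) :
    ∑' n, f n ≤ S + ENNReal.ofReal (A * Real.exp (-(ℓ * L)) * (1 - Real.exp (-ℓ))⁻¹) := by
  rw [← ENNReal.summable.sum_add_tsum_nat_add' (k := L), ← tsum_ofReal_mul_exp_neg_mul hℓ]
  refine add_le_add hinit (ENNReal.tsum_le_tsum fun n => ?_)
  refine (htail _ (Nat.le_add_left L n)).trans_eq ?_
  rw [mul_assoc, ← Real.exp_add]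
  push_cast
  ring_nf

section CocycleWindow

variable {G X : Type*} {σ : G → X → ℝ}

/-- The event that the cocycle started at `x` takes a value in `[t, t + a]`. -/
def cocycleWindow (σ : G → X → ℝ) (x : X) (t a : ℝ) : Set G :=
  {g | σ g x - t ∈ Set.Icc 0 a}

theorem measurableSet_cocycleWindow [MeasurableSpace G] (hmeas : ∀ x, Measurable fun g => σ g x)
    (x : X) (t a : ℝ) : MeasurableSet (cocycleWindow σ x t a) :=
  measurableSet_Icc.preimage ((hmeas x).sub_const t)

theorem mul_mem_cocycleWindow_iff [Monoid G] [MulAction G X] (hσ : IsCocycle σ) {g h : G}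
    {x : X} {t a : ℝ} :
    g * h ∈ cocycleWindow σ x t a ↔ g ∈ cocycleWindow σ (h • x) (t - σ h x) a := by
  rw [cocycleWindow, cocycleWindow, Set.mem_ofPred_eq, Set.mem_ofPred_eq, hσ g h x,
    sub_sub_eq_add_sub]

end CocycleWindow

section Deviations

variable {G X : Type*} [Monoid G] [MeasurableSpace G] {μ : Measure G} {σ : G → X → ℝ}
  {δ C ℓ : ℝ}

theorem LaplaceDecay.convPow_le (h : LaplaceDecay μ σ δ C ℓ)
    (hmeas : ∀ x, Measurable fun g => σ g x) (hδ : 0 ≤ δ) (n : ℕ) (x : X) (b : ℝ) :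
    convPow μ n {g | σ g x ≤ b} ≤ ENNReal.ofReal (C * Real.exp (δ * b) * Real.exp (-(ℓ * n))) := by
  have hm : Measurable fun g => ENNReal.ofReal (Real.exp (-(δ * σ g x))) := by
    have := hmeas x
    fun_prop
  calc convPow μ n {g | σ g x ≤ b}
      ≤ convPow μ n {g | ENNReal.ofReal (Real.exp (-(δ * b)))
          ≤ ENNReal.ofReal (Real.exp (-(δ * σ g x)))} := by
        refine measure_mono fun g (hg : σ g x ≤ b) => ENNReal.ofReal_le_ofReal ?_
        gcongr
    _ ≤ (∫⁻ g, ENNReal.ofReal (Real.exp (-(δ * σ g x))) ∂convPow μ n)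
          / ENNReal.ofReal (Real.exp (-(δ * b))) :=
        meas_ge_le_lintegral_div hm.aemeasurable (by simpa using Real.exp_pos _)
          ENNReal.ofReal_ne_top
    _ ≤ ENNReal.ofReal (C * Real.exp (-(ℓ * n))) / ENNReal.ofReal (Real.exp (-(δ * b))) := by
        gcongr
        exact h n x
    _ = ENNReal.ofReal (C * Real.exp (δ * b) * Real.exp (-(ℓ * n))) := by
        rw [← ENNReal.ofReal_div_of_pos (Real.exp_pos _), Real.exp_neg (δ * b), div_inv_eq_mul,
          mul_right_comm]

variable [MulAction G X] [MeasurableMul₂ G] [IsProbabilityMeasure μ]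

-- The walk contributes nothing to the sum before it first enters the window, from where the sum
-- restarts with `t ∈ [-a, 0]`.
theorem sum_range_convPow_cocycleWindow_le (hσ : IsCocycle σ)
    (hmeas : ∀ x, Measurable fun g => σ g x) {a : ℝ} {B : ENNReal}
    (hB : ∀ t ∈ Set.Icc (-a) 0, ∀ x, ∑' n, convPow μ n (cocycleWindow σ x t a) ≤ B) (N : ℕ)
    (t : ℝ) (x : X) : ∑ n ∈ Finset.range N, convPow μ n (cocycleWindow σ x t a) ≤ B := by
  induction N generalizing t x with
  | zero => simp
  | succ N ih =>
    by_cases ht : t ∈ Set.Icc (-a) 0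
    · exact (ENNReal.sum_le_tsum _).trans (hB t ht x)
    have hzero : convPow μ 0 (cocycleWindow σ x t a) = 0 := by
      rw [convPow, Measure.dirac_apply' _ (measurableSet_cocycleWindow hmeas x t a),
        Set.indicator_of_notMem]
      rintro ⟨h0, h1⟩
      rw [hσ.map_one] at h0 h1
      exact ht ⟨by linarith, by linarith⟩
    have hm (n : ℕ) : Measurable fun h => convPow μ n {g | g * h ∈ cocycleWindow σ x t a} :=
      measurable_measure_prodMk_right
        (measurable_mul (measurableSet_cocycleWindow hmeas x t a))
    rw [Finset.sum_range_succ', hzero, add_zero]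
    simp only [convPow_add_apply _ 1 (measurableSet_cocycleWindow hmeas x t a)]
    rw [← lintegral_finsetSum _ fun n _ => hm n]
    calc ∫⁻ h, ∑ n ∈ Finset.range N, convPow μ n {g | g * h ∈ cocycleWindow σ x t a} ∂convPow μ 1
        ≤ ∫⁻ _, B ∂convPow μ 1 := by
          simp only [mul_mem_cocycleWindow_iff hσ, Set.ofPred_mem_eq]
          exact lintegral_mono fun h => ih _ _
      _ = B := by simp

theorem exists_forall_tsum_convPow_cocycleWindow_le (hσ : IsCocycle σ)
    (hmeas : ∀ x, Measurable fun g => σ g x) (hδ : 0 < δ) (hC : 0 < C) (hℓ : 0 < ℓ)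
    (h : LaplaceDecay μ σ δ C ℓ) :
    ∃ B > 0, ∀ a ≥ 0, ∀ t x,
      ∑' n, convPow μ n (cocycleWindow σ x t a) ≤ ENNReal.ofReal (B * (1 + a)) := by
  have hS : 0 < (1 - Real.exp (-ℓ))⁻¹ := inv_pos.2 (sub_pos.2 (Real.exp_lt_one_iff.2 (by linarith)))
  refine ⟨δ / ℓ + 1 + C * (1 - Real.exp (-ℓ))⁻¹, by positivity, fun a ha t x => ?_⟩
  rw [ENNReal.tsum_eq_iSup_nat]
  refine iSup_le fun N => sum_range_convPow_cocycleWindow_le hσ hmeas (fun t ht x => ?_) N t x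
  set L := ⌈δ * a / ℓ⌉₊
  have hδL : δ * a ≤ ℓ * L := (div_le_iff₀' hℓ).1 (Nat.le_ceil _)
  have hL : (L : ℝ) ≤ δ * a / ℓ + 1 := (Nat.ceil_lt_add_one (by positivity)).le
  calc ∑' n, convPow μ n (cocycleWindow σ x t a)
      ≤ L + ENNReal.ofReal (C * Real.exp (δ * a) * Real.exp (-(ℓ * L)) *
          (1 - Real.exp (-ℓ))⁻¹) := by
        refine tsum_le_of_tail_le_exp hℓ ?_ fun n _ => ?_
        · exact (Finset.sum_le_sum fun n _ => prob_le_one).trans (by simp)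
        · refine (measure_mono fun g hg => ?_).trans (h.convPow_le hmeas hδ.le n x a)
          exact (by linarith [hg.2, ht.2] : σ g x ≤ a)
    _ ≤ ENNReal.ofReal (L + C * (1 - Real.exp (-ℓ))⁻¹) := by
        rw [ENNReal.ofReal_add (by positivity) (by positivity), ENNReal.ofReal_natCast]
        gcongr
        rw [mul_assoc, ← Real.exp_add]
        exact mul_le_of_le_one_right hC.le (Real.exp_le_one_iff.2 (by linarith))
    _ ≤ ENNReal.ofReal ((δ / ℓ + 1 + C * (1 - Real.exp (-ℓ))⁻¹) * (1 + a)) := by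
        refine ENNReal.ofReal_le_ofReal ?_
        have : δ * a / ℓ = δ / ℓ * a := by ring
        have := mul_nonneg hC.le hS.le
        nlinarith [div_pos hδ hℓ]

end Deviations

/-! ### Regularity of the backward walk -/

theorem prod_le_of_forall_le {α β : Type*} [MeasurableSpace α] [MeasurableSpace β] {μ : Measure α}
    [IsProbabilityMeasure μ] {ν : Measure β} [SFinite ν] {s : Set (α × β)} (hs : MeasurableSet s)
    {A : ENNReal} (h : ∀ x, ν {y | (x, y) ∈ s} ≤ A) : μ.prod ν s ≤ A := by
  rw [Measure.prod_apply hs]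
  exact (lintegral_mono h).trans (by simp)

theorem abs_det2_smul_smul_le (g : SL2) (y z : UnitCircle) :
    |det2 (g • y : UnitCircle) (g • z : UnitCircle)|
      ≤ Real.exp (-(logNorm g y + logNorm g z)) := by
  have hy := norm_linAct_pos g y
  have hz := norm_linAct_pos g z
  have hdet : |det2 y z| ≤ 1 := by
    simpa only [norm_eq_of_mem_sphere, mul_one] using abs_det2_le (y : Plane) z
  rw [UnitCircle.coe_smul, UnitCircle.coe_smul, det2_smul_left, det2_smul_right, det2_linAct,
    abs_mul, abs_mul, abs_of_pos (inv_pos.2 hy), abs_of_pos (inv_pos.2 hz), neg_add, Real.exp_add,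
    logNorm, logNorm, Real.exp_neg, Real.exp_neg, Real.exp_log hy, Real.exp_log hz]
  gcongr
  exact mul_le_of_le_one_right (inv_nonneg.2 hz.le) hdet

theorem norm_linAct_le_inv_add (g : SL2) (y z : UnitCircle) :
    ‖linAct g z‖ ≤ ‖linAct g⁻¹ y‖⁻¹ + |det2 (g⁻¹ • y : UnitCircle) z| * opNorm g := by
  have hpos := norm_linAct_pos g⁻¹ y
  have hle := norm_linAct_inv_mul_norm_linAct_le g y (ne_zero_of_mem_unit_sphere z)
  rw [norm_eq_of_mem_sphere, norm_eq_of_mem_sphere, mul_one] at hle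
  rw [UnitCircle.coe_smul, det2_smul_left, det2_linAct_inv, abs_mul, abs_of_pos (inv_pos.2 hpos),
    mul_assoc]
  calc ‖linAct g z‖ = ‖linAct g⁻¹ y‖⁻¹ * (‖linAct g⁻¹ y‖ * ‖linAct g z‖) := by field_simp
    _ ≤ ‖linAct g⁻¹ y‖⁻¹ * (1 + |det2 y (linAct g z)| * opNorm g) := by gcongr
    _ = _ := by ring

/-- The event that `g⁻¹ u` and `w` are at distance at most `r`, where the distance is the sine
`|det(g⁻¹ u, w)|` of the angle between the two lines. -/
def backwardNear (u w : UnitCircle) (r : ℝ) : Set SL2 :=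
  {g | |det2 (g⁻¹ • u : UnitCircle) w| ≤ r}

section BackwardNear

theorem measurableSet_backwardNear (u w : UnitCircle) (r : ℝ) :
    MeasurableSet (backwardNear u w r) := by
  have hinv : Continuous fun g : SL2 => (g⁻¹ • u : UnitCircle) :=
    continuous_inv.smul continuous_const
  have hdet : Continuous fun z : UnitCircle => |det2 z w| := by fun_prop
  exact (isClosed_le (hdet.comp hinv) continuous_const).measurableSet

theorem mul_mem_backwardNear_iff {g h : SL2} {u w : UnitCircle} {r : ℝ} :
    g * h ∈ backwardNear u w r ↔ h ∈ backwardNear (g⁻¹ • u) w r := by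
  rw [backwardNear, backwardNear, Set.mem_ofPred_eq, Set.mem_ofPred_eq, mul_inv_rev, mul_smul]

theorem backwardNear_subset (u w : UnitCircle) (s : ℝ) :
    backwardNear u w (2 * Real.exp (-s)) ⊆
      {g | logNorm g⁻¹ u ≤ 0} ∪ {g | logNorm g w ≤ Real.log 3} ∪ {g | s ≤ Real.log (opNorm g)} := by
  intro g (hg : |det2 (g⁻¹ • u : UnitCircle) w| ≤ _)
  by_contra! hnot
  obtain ⟨⟨hu, hw⟩, hs⟩ : (0 < logNorm g⁻¹ u ∧ Real.log 3 < logNorm g w) ∧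
      Real.log (opNorm g) < s := by
    simpa [not_or] using hnot
  have hu' : ‖linAct g⁻¹ u‖⁻¹ < 1 :=
    inv_lt_one_of_one_lt₀ ((Real.log_pos_iff (norm_nonneg _)).1 hu)
  have hw' : 3 < ‖linAct g w‖ := (Real.log_lt_log_iff three_pos (norm_linAct_pos g w)).1 hw
  have hs' : opNorm g < Real.exp s := (Real.log_lt_iff_lt_exp (opNorm_pos g)).1 hs
  have hdet : |det2 (g⁻¹ • u : UnitCircle) w| * opNorm g ≤ 2 :=
    calc _ ≤ 2 * Real.exp (-s) * Real.exp s := by gcongr; exact opNorm_nonneg g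
      _ = 2 := by rw [mul_assoc, ← Real.exp_add, neg_add_cancel, Real.exp_zero, mul_one]
  linarith [norm_linAct_le_inv_add g u w]

variable {μ : Measure SL2} {ε Λ δ C ℓ : ℝ}

theorem MomentGrowth.convPow_le (hmom : MomentGrowth μ ε Λ) (hε : 0 ≤ ε) (n : ℕ) (s : ℝ) :
    convPow μ n {g | s ≤ Real.log (opNorm g)} ≤ ENNReal.ofReal (Real.exp (Λ * n - ε * s)) := by
  calc convPow μ n {g | s ≤ Real.log (opNorm g)}
      ≤ convPow μ n {g | ENNReal.ofReal (Real.exp (ε * s)) ≤ ENNReal.ofReal (opNorm g ^ ε)} := by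
        refine measure_mono fun g (hg : s ≤ _) => ENNReal.ofReal_le_ofReal ?_
        rw [Real.rpow_def_of_pos (opNorm_pos g), mul_comm]
        gcongr
    _ ≤ (∫⁻ g, ENNReal.ofReal (opNorm g ^ ε) ∂convPow μ n) / ENNReal.ofReal (Real.exp (ε * s)) :=
        meas_ge_le_lintegral_div (by fun_prop) (by simpa using Real.exp_pos _)
          ENNReal.ofReal_ne_top
    _ ≤ ENNReal.ofReal (Real.exp (Λ * n)) / ENNReal.ofReal (Real.exp (ε * s)) := by
        gcongr
        exact hmom n
    _ = ENNReal.ofReal (Real.exp (Λ * n - ε * s)) := by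
        rw [← ENNReal.ofReal_div_of_pos (Real.exp_pos _), Real.exp_sub]

variable [IsProbabilityMeasure μ]

theorem convPow_backwardNear_le_of_le {k n : ℕ} (hkn : k ≤ n) {w : UnitCircle} {r : ℝ}
    {A : ENNReal} (h : ∀ u, convPow μ k (backwardNear u w r) ≤ A) (u : UnitCircle) :
    convPow μ n (backwardNear u w r) ≤ A := by
  obtain ⟨m, rfl⟩ := Nat.exists_eq_add_of_le' hkn
  have hs := measurableSet_backwardNear u w r
  rw [convPow_add_apply_eq_prod m k hs]
  refine prod_le_of_forall_le (s := {p | p.1 * p.2 ∈ backwardNear u w r}) (measurable_mul hs)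
    fun g => ?_
  simp only [Set.mem_ofPred_eq, mul_mem_backwardNear_iff, Set.ofPred_mem_eq]
  exact h (g⁻¹ • u)

theorem LaplaceDecay.convPow_inv_le (h : LaplaceDecay (μ.map (·⁻¹)) logNorm δ C ℓ) (hδ : 0 ≤ δ)
    (n : ℕ) (y : UnitCircle) (b : ℝ) :
    convPow μ n {g | logNorm g⁻¹ y ≤ b}
      ≤ ENNReal.ofReal (C * Real.exp (δ * b) * Real.exp (-(ℓ * n))) := by
  have hle := h.convPow_le measurable_logNorm hδ n y b
  rwa [convPow_map_inv, Measure.map_apply measurable_inv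
    (measurableSet_le (measurable_logNorm y) measurable_const)] at hle

theorem convPow_backwardNear_two_mul_exp_neg_le (hε : 0 ≤ ε) (hmom : MomentGrowth μ ε Λ)
    (hδ : 0 ≤ δ) (hC : 0 ≤ C) (hdecay : LaplaceDecay μ logNorm δ C ℓ)
    (hdecay' : LaplaceDecay (μ.map (·⁻¹)) logNorm δ C ℓ) (n : ℕ) (s : ℝ) (u w : UnitCircle) :
    convPow μ n (backwardNear u w (2 * Real.exp (-s))) ≤ ENNReal.ofReal
      (C * (1 + Real.exp (δ * Real.log 3)) * Real.exp (-(ℓ * n)) + Real.exp (Λ * n - ε * s)) := by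
  refine (measure_mono (backwardNear_subset u w s)).trans ((measure_union_le _ _).trans ?_)
  rw [ENNReal.ofReal_add (by positivity) (Real.exp_nonneg _)]
  refine add_le_add ((measure_union_le _ _).trans ?_) (hmom.convPow_le hε n s)
  calc _ ≤ ENNReal.ofReal (C * Real.exp (δ * 0) * Real.exp (-(ℓ * n))) +
        ENNReal.ofReal (C * Real.exp (δ * Real.log 3) * Real.exp (-(ℓ * n))) :=
        add_le_add (hdecay'.convPow_inv_le hδ n u 0)
          (hdecay.convPow_le measurable_logNorm hδ n w _)
    _ = _ := by
        rw [← ENNReal.ofReal_add (by positivity) (by positivity), mul_zero, Real.exp_zero]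
        ring_nf

/- The walk is looked at along its last `k ≍ s` letters only: `k` must be large for the contraction
to act and small for the norm to stay below `exp s`. -/
theorem exists_forall_convPow_backwardNear_le (hε : 0 < ε) (hΛ : 0 < Λ)
    (hmom : MomentGrowth μ ε Λ) (hδ : 0 ≤ δ) (hC : 0 ≤ C) (hℓ : 0 < ℓ)
    (hdecay : LaplaceDecay μ logNorm δ C ℓ)
    (hdecay' : LaplaceDecay (μ.map (·⁻¹)) logNorm δ C ℓ) {η : ℝ} (hη : 0 < η) :
    ∃ K > 0, ∃ c > 0, ∀ s ≥ 0, ∀ n : ℕ, η * s ≤ n → ∀ u w,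
      convPow μ n (backwardNear u w (2 * Real.exp (-s))) ≤ ENNReal.ofReal
        (K * Real.exp (-(c * s))) := by
  set η' := min η (ε / (2 * Λ))
  have : 0 < η' := by positivity
  have hΛη' : Λ * η' ≤ ε / 2 :=
    calc Λ * η' ≤ Λ * (ε / (2 * Λ)) := by gcongr; exact min_le_right _ _
      _ = ε / 2 := by field_simp
  set c := min (ℓ * η') (ε / 2)
  set C' := C * (1 + Real.exp (δ * Real.log 3))
  have : 0 ≤ C' := by positivity
  refine ⟨C' + Real.exp Λ, by positivity, c, by positivity, fun s hs n hn u w => ?_⟩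
  set k := ⌈η' * s⌉₊
  have hkn : k ≤ n := Nat.ceil_le.2 (le_trans (by gcongr; exact min_le_left _ _) hn)
  have hk : η' * s ≤ k := Nat.le_ceil _
  have hk' : (k : ℝ) ≤ η' * s + 1 := (Nat.ceil_lt_add_one (by positivity)).le
  refine (convPow_backwardNear_le_of_le hkn (fun u => convPow_backwardNear_two_mul_exp_neg_le hε.le
    hmom hδ hC hdecay hdecay' k s u w) u).trans (ENNReal.ofReal_le_ofReal ?_)
  have hc : c ≤ ℓ * η' := min_le_left _ _
  have hc' : c ≤ ε / 2 := min_le_right _ _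
  have hexp : -(ℓ * k) ≤ -(c * s) := by nlinarith
  have hexp' : Λ * k - ε * s ≤ Λ + -(c * s) := by nlinarith
  rw [add_mul, ← Real.exp_add]
  gcongr

end BackwardNear

/-! ### Independence of the backward direction and the norm -/

theorem tsum_prod_inter_snd_le {ι α β : Type*} [Countable ι] [MeasurableSpace α]
    [MeasurableSpace β] {μ : ι → Measure α} [∀ i, SFinite (μ i)] {ν : Measure β} [SFinite ν]
    {s : Set (α × β)} {t : Set β} (hs : MeasurableSet s) (ht : MeasurableSet t) {A : ENNReal}
    (h : ∀ y, ∑' i, μ i {x | (x, y) ∈ s} ≤ A) :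
    ∑' i, (μ i).prod ν (s ∩ Prod.snd ⁻¹' t) ≤ A * ν t := by
  have hslice (i : ι) : (μ i).prod ν (s ∩ Prod.snd ⁻¹' t)
      ≤ ∫⁻ y in t, μ i {x | (x, y) ∈ s} ∂ν := by
    rw [Measure.prod_apply_symm (hs.inter (measurable_snd ht)), ← lintegral_indicator ht]
    refine lintegral_mono fun y => ?_
    by_cases hy : y ∈ t <;> simp [hy, Set.preimage]
  calc ∑' i, (μ i).prod ν (s ∩ Prod.snd ⁻¹' t)
      ≤ ∑' i, ∫⁻ y in t, μ i {x | (x, y) ∈ s} ∂ν := ENNReal.tsum_le_tsum hslice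
    _ = ∫⁻ y in t, ∑' i, μ i {x | (x, y) ∈ s} ∂ν :=
        (lintegral_tsum fun i => (measurable_measure_prodMk_right hs).aemeasurable).symm
    _ ≤ ∫⁻ _ in t, A ∂ν := lintegral_mono h
    _ = A * ν t := setLIntegral_const t A

theorem one_add_mul_exp_neg_le {c t : ℝ} (hc : 0 < c) (ht : 0 ≤ t) :
    (1 + t) * Real.exp (-(c * t)) ≤ (1 + 2 / c) * Real.exp (-(c / 2 * t)) := by
  have hlin : 1 + t ≤ (1 + 2 / c) * Real.exp (c / 2 * t) :=
    calc 1 + t ≤ (1 + 2 / c) * (c / 2 * t + 1) := by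
          have : (1 + 2 / c) * (c / 2 * t + 1) = 1 + t + (c / 2 * t + 2 / c) := by field_simp; ring
          rw [this]
          exact le_add_of_nonneg_right (by positivity)
      _ ≤ (1 + 2 / c) * Real.exp (c / 2 * t) := by gcongr; exact Real.add_one_le_exp _
  calc (1 + t) * Real.exp (-(c * t))
      ≤ (1 + 2 / c) * Real.exp (c / 2 * t) * Real.exp (-(c * t)) := by gcongr
    _ = (1 + 2 / c) * Real.exp (-(c / 2 * t)) := by
        rw [mul_assoc, ← Real.exp_add]
        ring_nf

theorem ceil_mul_exp_neg_le {κ c s t a : ℝ} (hκ : 0 ≤ κ) (hc : 0 < c) (ht : 0 ≤ t) (hst : s ≤ t)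
    (ha : 0 ≤ a) : ⌈κ * (t + a)⌉₊ * Real.exp (-(c * t))
      ≤ (κ + 1) * (1 + 2 / c) * (1 + a) * Real.exp (-(c / 2 * s)) := by
  have hceil : (⌈κ * (t + a)⌉₊ : ℝ) ≤ (κ + 1) * (1 + a) * (1 + t) :=
    calc (⌈κ * (t + a)⌉₊ : ℝ) ≤ κ * (t + a) + 1 := (Nat.ceil_lt_add_one (by positivity)).le
      _ ≤ (κ + 1) * (t + a + 1) := by nlinarith
      _ ≤ (κ + 1) * ((1 + a) * (1 + t)) := by gcongr; nlinarith
      _ = _ := by ring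
  calc _ ≤ (κ + 1) * (1 + a) * (1 + t) * Real.exp (-(c * t)) := by gcongr
    _ ≤ (κ + 1) * (1 + a) * ((1 + 2 / c) * Real.exp (-(c / 2 * t))) := by
        rw [mul_assoc]
        exact mul_le_mul_of_nonneg_left (one_add_mul_exp_neg_le hc ht) (by positivity)
    _ ≤ (κ + 1) * (1 + a) * ((1 + 2 / c) * Real.exp (-(c / 2 * s))) := by gcongr
    _ = _ := by ring

theorem exp_mul_exp_neg_ceil_le {δ ℓ s T : ℝ} (hδ : 0 ≤ δ) (hℓ : 0 < ℓ) (hsT : s ≤ T) :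
    Real.exp (δ * T) * Real.exp (-(ℓ * ⌈2 * δ / ℓ * T⌉₊)) ≤ Real.exp (-(δ * s)) := by
  rw [← Real.exp_add]
  gcongr
  have hceil : 2 * δ / ℓ * T * ℓ ≤ ⌈2 * δ / ℓ * T⌉₊ * ℓ := by gcongr; exact Nat.le_ceil _
  have hcancel : 2 * δ / ℓ * T * ℓ = 2 * (δ * T) := by field_simp
  linarith [mul_le_mul_of_nonneg_left hsT hδ]

theorem ofReal_mul_exp_neg_add_le {A A' c c' s : ℝ} (hA : 0 ≤ A) (hA' : 0 ≤ A') (hs : 0 ≤ s) :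
    ENNReal.ofReal (A * Real.exp (-(c * s))) + ENNReal.ofReal (A' * Real.exp (-(c' * s)))
      ≤ ENNReal.ofReal ((A + A') * Real.exp (-(min c c' * s))) := by
  rw [← ENNReal.ofReal_add (by positivity) (by positivity), add_mul]
  gcongr
  exacts [min_le_left _ _, min_le_right _ _]

/- The two errors made when a sum over `n` is cut at `L ≍ t + a`, see
`tsum_le_of_le_add_of_le_exp`: one grows linearly in `L`, the other decays exponentially. -/
theorem exists_forall_truncation_error_le {δ C ℓ c : ℝ} (hδ : 0 < δ) (hC : 0 < C) (hℓ : 0 < ℓ)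
    (hc : 0 < c) : ∃ K > 0, ∃ c' > 0, ∀ s ≥ 0, ∀ t ≥ s, ∀ a ≥ 0,
      ⌈2 * δ / ℓ * (t + a)⌉₊ * (2 * ENNReal.ofReal (C * Real.exp (-(c * t)))) +
      ENNReal.ofReal (C * Real.exp (δ * (t + a)) *
        Real.exp (-(ℓ * ⌈2 * δ / ℓ * (t + a)⌉₊)) * (1 - Real.exp (-ℓ))⁻¹)
        ≤ ENNReal.ofReal (K * (1 + a) * Real.exp (-(c' * s))) := by
  set κ := 2 * δ / ℓ
  set S := (1 - Real.exp (-ℓ))⁻¹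
  have hS : 0 < S := inv_pos.2 (sub_pos.2 (Real.exp_lt_one_iff.2 (neg_neg_of_pos hℓ)))
  set D := 2 * C * ((κ + 1) * (1 + 2 / c))
  refine ⟨D + C * S, by positivity, min (c / 2) δ, by positivity, fun s hs t hst a ha => ?_⟩
  set L := ⌈κ * (t + a)⌉₊
  have hlinear : L * (2 * (C * Real.exp (-(c * t)))) ≤ D * (1 + a) * Real.exp (-(c / 2 * s)) :=
    calc _ = 2 * C * (L * Real.exp (-(c * t))) := by ring
      _ ≤ 2 * C * ((κ + 1) * (1 + 2 / c) * (1 + a) * Real.exp (-(c / 2 * s))) :=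
          mul_le_mul_of_nonneg_left
            (ceil_mul_exp_neg_le (by positivity) hc (hs.trans hst) hst ha) (by positivity)
      _ = _ := by simp only [D]; ring
  have hexp : C * Real.exp (δ * (t + a)) * Real.exp (-(ℓ * L)) * S
      ≤ C * S * (1 + a) * Real.exp (-(δ * s)) :=
    calc _ = C * S * 1 * (Real.exp (δ * (t + a)) * Real.exp (-(ℓ * L))) := by ring
      _ ≤ C * S * (1 + a) * Real.exp (-(δ * s)) := by
          gcongr
          · linarith
          · exact exp_mul_exp_neg_ceil_le hδ.le hℓ (by linarith)
  calc _ ≤ ENNReal.ofReal (D * (1 + a) * Real.exp (-(c / 2 * s))) +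
        ENNReal.ofReal (C * S * (1 + a) * Real.exp (-(δ * s))) := by
        gcongr
        simpa [ENNReal.ofReal_mul] using ENNReal.ofReal_le_ofReal hlinear
    _ ≤ ENNReal.ofReal ((D * (1 + a) + C * S * (1 + a)) * Real.exp (-(min (c / 2) δ * s))) :=
        ofReal_mul_exp_neg_add_le (by positivity) (by positivity) hs
    _ = _ := by rw [add_mul D]

theorem tsum_le_of_le_add_of_le_exp {ℓ A : ℝ} (hℓ : 0 < ℓ) {f q : ℕ → ENNReal} {β : ENNReal}
    (hadd : ∀ n, f n ≤ β + q n) (hexp : ∀ n, f n ≤ ENNReal.ofReal (A * Real.exp (-(ℓ * n))))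
    (L : ℕ) : ∑' n, f n ≤ L * β + ∑' n, q n +
      ENNReal.ofReal (A * Real.exp (-(ℓ * L)) * (1 - Real.exp (-ℓ))⁻¹) := by
  refine tsum_le_of_tail_le_exp hℓ ?_ fun n _ => hexp n
  calc ∑ n ∈ Finset.range L, f n ≤ ∑ n ∈ Finset.range L, (β + q n) :=
        Finset.sum_le_sum fun n _ => hadd n
    _ ≤ L * β + ∑' n, q n := by
        rw [Finset.sum_add_distrib, Finset.sum_const, Finset.card_range, nsmul_eq_mul]
        gcongr
        exact ENNReal.sum_le_tsum _

section Independence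

/- Once the last letters `h` contract strongly, `h⁻¹ g⁻¹ u` does not depend much on `g`, and may be
replaced by `h⁻¹ u`. -/
theorem mem_backwardNear_of_mul_mem {g h : SL2} {u w : UnitCircle} {r b : ℝ}
    (hgh : g * h ∈ backwardNear u w r) (hb : b < logNorm h⁻¹ (g⁻¹ • u))
    (hb' : b < logNorm h⁻¹ u) : h ∈ backwardNear u w (r + Real.exp (-(2 * b))) := by
  have hnear : |det2 (h⁻¹ • g⁻¹ • u : UnitCircle) w| ≤ r := mul_mem_backwardNear_iff.1 hgh
  have hcontr : |det2 (h⁻¹ • u : UnitCircle) (h⁻¹ • g⁻¹ • u : UnitCircle)|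
      ≤ Real.exp (-(2 * b)) :=
    (abs_det2_smul_smul_le _ _ _).trans (Real.exp_le_exp.2 (by linarith))
  have htri := abs_det2_triangle (norm_eq_of_mem_sphere (h⁻¹ • u))
    (norm_eq_of_mem_sphere (h⁻¹ • g⁻¹ • u)) (norm_eq_of_mem_sphere w)
  exact (by linarith : |det2 (h⁻¹ • u : UnitCircle) w| ≤ r + Real.exp (-(2 * b)))

variable {μ : Measure SL2} {ε Λ δ C ℓ : ℝ}

theorem exists_forall_sum_range_ceil_convPow_cocycleWindow_le (hε : 0 < ε) (hΛ : 0 ≤ Λ)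
    (hmom : MomentGrowth μ ε Λ) {η : ℝ} (hη : 0 ≤ η) (hΛη : Λ * η ≤ ε / 2) :
    ∃ K > 0, ∃ c > 0, ∀ t ≥ 0, ∀ y a, ∑ n ∈ Finset.range ⌈η * t⌉₊,
      convPow μ n (cocycleWindow logNorm y t a) ≤ ENNReal.ofReal (K * Real.exp (-(c * t))) := by
  refine ⟨(η + 1) * (1 + 2 / (ε / 2)), by positivity, ε / 2 / 2, by positivity,
    fun t ht y a => ?_⟩
  have hterm (n : ℕ) (hn : n ∈ Finset.range ⌈η * t⌉₊) :
      convPow μ n (cocycleWindow logNorm y t a) ≤ ENNReal.ofReal (Real.exp (-(ε / 2 * t))) := by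
    have hlt : (n : ℝ) < η * t := Nat.lt_ceil.1 (Finset.mem_range.1 hn)
    calc convPow μ n (cocycleWindow logNorm y t a)
        ≤ convPow μ n {g | t ≤ Real.log (opNorm g)} := measure_mono fun g hg =>
          (sub_nonneg.1 hg.1).trans ((le_abs_self _).trans (abs_logNorm_le g y))
      _ ≤ ENNReal.ofReal (Real.exp (Λ * n - ε * t)) := hmom.convPow_le hε.le n t
      _ ≤ ENNReal.ofReal (Real.exp (-(ε / 2 * t))) := by
          refine ENNReal.ofReal_le_ofReal (Real.exp_le_exp.2 ?_)
          linarith [mul_le_mul_of_nonneg_left hlt.le hΛ, mul_le_mul_of_nonneg_right hΛη ht]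
  calc _ ≤ ENNReal.ofReal (⌈η * t⌉₊ * Real.exp (-(ε / 2 * t))) := by
        rw [ENNReal.ofReal_mul (Nat.cast_nonneg _), ENNReal.ofReal_natCast, ← nsmul_eq_mul]
        exact (Finset.sum_le_card_nsmul _ _ _ hterm).trans_eq (by rw [Finset.card_range])
    _ ≤ _ := ENNReal.ofReal_le_ofReal <| by
        simpa using ceil_mul_exp_neg_le hη (half_pos hε) ht le_rfl le_rfl

theorem LaplaceDecay.convPow_add_cocycleWindow_le (hdecay : LaplaceDecay μ logNorm δ C ℓ)
    (hδ : 0 ≤ δ) (hC : 0 ≤ C) (hℓ : 0 ≤ ℓ) (n m : ℕ) (y : UnitCircle) (t a : ℝ) :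
    convPow μ (n + m) (cocycleWindow logNorm y t a)
      ≤ ENNReal.ofReal (C * Real.exp (δ * (t + a)) * Real.exp (-(ℓ * n))) := by
  refine (measure_mono fun g hg => ?_).trans
    ((hdecay.convPow_le measurable_logNorm hδ (n + m) y (t + a)).trans
      (ENNReal.ofReal_le_ofReal ?_))
  · exact (by linarith [hg.2] : logNorm g y ≤ t + a)
  · push_cast
    gcongr
    exact le_add_of_nonneg_right m.cast_nonneg

variable [IsProbabilityMeasure μ]

theorem convPow_add_backwardNear_inter_le {β : ENNReal} {b : ℝ} {m : ℕ}
    (hβ : ∀ z, convPow μ m {h | logNorm h⁻¹ z ≤ b} ≤ β) {W : Set SL2} (hW : MeasurableSet W)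
    (n : ℕ) (u w : UnitCircle) (r : ℝ) :
    convPow μ (n + m) (backwardNear u w r ∩ W) ≤ 2 * β + (convPow μ n).prod (convPow μ m)
      ({p | p.1 * p.2 ∈ W} ∩ Prod.snd ⁻¹' backwardNear u w (r + Real.exp (-(2 * b)))) := by
  set A : Set (SL2 × SL2) := {p | logNorm p.2⁻¹ (p.1⁻¹ • u) ≤ b}
  set A' : Set (SL2 × SL2) := {p | logNorm p.2⁻¹ u ≤ b}
  have hA : MeasurableSet A := by
    have hcont : Continuous fun p : SL2 × SL2 => (p.1⁻¹ • u : UnitCircle) :=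
      continuous_fst.inv.smul continuous_const
    exact (isClosed_le (continuous_logNorm.comp (continuous_snd.inv.prodMk hcont))
      continuous_const).measurableSet
  have hA' : MeasurableSet A' :=
    measurableSet_le ((measurable_logNorm u).comp measurable_snd.inv) measurable_const
  rw [convPow_add_apply_eq_prod n m ((measurableSet_backwardNear u w r).inter hW), two_mul]
  calc _ ≤ (convPow μ n).prod (convPow μ m) (A ∪ A' ∪ ({p | p.1 * p.2 ∈ W} ∩
        Prod.snd ⁻¹' backwardNear u w (r + Real.exp (-(2 * b))))) := by
        refine measure_mono fun p hp => or_iff_not_imp_left.2 fun hnot => ?_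
        rw [Set.mem_union, not_or] at hnot
        exact ⟨hp.2, mem_backwardNear_of_mul_mem hp.1 (not_le.1 hnot.1) (not_le.1 hnot.2)⟩
    _ ≤ β + β + _ := by
        refine (measure_union_le _ _).trans (add_le_add_left ((measure_union_le _ _).trans ?_) _)
        exact add_le_add (prod_le_of_forall_le hA fun g => hβ (g⁻¹ • u))
          (prod_le_of_forall_le hA' fun _ => hβ u)

theorem exists_forall_tsum_prod_inter_backwardNear_le (hε : 0 < ε) (hΛ : 0 < Λ)
    (hmom : MomentGrowth μ ε Λ) (hδ : 0 < δ) (hC : 0 < C) (hℓ : 0 < ℓ)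
    (hdecay : LaplaceDecay μ logNorm δ C ℓ)
    (hdecay' : LaplaceDecay (μ.map (·⁻¹)) logNorm δ C ℓ) {η γ : ℝ} (hη : 0 < η) (hγ : 0 < γ) :
    ∃ K > 0, ∃ c > 0, ∀ s ≥ 0, ∀ a ≥ 0, ∀ m : ℕ, η * s ≤ m → ∀ t y u w,
      ∑' n, (convPow μ n).prod (convPow μ m)
        ({p | p.1 * p.2 ∈ cocycleWindow logNorm y t a} ∩
          Prod.snd ⁻¹' backwardNear u w (Real.exp (-s) + Real.exp (-(2 * (γ * m)))))
        ≤ ENNReal.ofReal (K * (1 + a) * Real.exp (-(c * s))) := by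
  obtain ⟨B, hB, hrenewal⟩ :=
    exists_forall_tsum_convPow_cocycleWindow_le isCocycle_logNorm measurable_logNorm hδ hC hℓ hdecay
  obtain ⟨K, hK, c, hc, hregular⟩ :=
    exists_forall_convPow_backwardNear_le hε hΛ hmom hδ.le hC.le hℓ hdecay hdecay' hη
  set c₀ := min 1 (2 * γ * η)
  have hc₀ : 0 < c₀ := by positivity
  refine ⟨B * K, by positivity, c * c₀, mul_pos hc hc₀, fun s hs a ha m hm t y u w => ?_⟩
  have hc₀s : c₀ * s ≤ s := mul_le_of_le_one_left hs (min_le_left _ _)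
  have hc₀m : c₀ * s ≤ 2 * (γ * m) :=
    calc c₀ * s ≤ 2 * γ * η * s := by gcongr; exact min_le_right _ _
      _ = 2 * (γ * (η * s)) := by ring
      _ ≤ 2 * (γ * m) := by gcongr
  have hradius : Real.exp (-s) + Real.exp (-(2 * (γ * m))) ≤ 2 * Real.exp (-(c₀ * s)) := by
    rw [two_mul (Real.exp _)]
    exact add_le_add (Real.exp_le_exp.2 (neg_le_neg hc₀s)) (Real.exp_le_exp.2 (neg_le_neg hc₀m))
  have hwindow := measurableSet_cocycleWindow measurable_logNorm y t a
  refine (tsum_prod_inter_snd_le (measurable_mul hwindow) (measurableSet_backwardNear _ _ _)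
    (A := ENNReal.ofReal (B * (1 + a))) fun h => ?_).trans ?_
  · refine (ENNReal.tsum_le_tsum fun n => measure_mono fun g hg => ?_).trans
      (hrenewal a ha (t - logNorm h y) (h • y))
    exact (mul_mem_cocycleWindow_iff isCocycle_logNorm).1 hg
  · calc _ ≤ ENNReal.ofReal (B * (1 + a)) * ENNReal.ofReal (K * Real.exp (-(c * (c₀ * s)))) := by
          gcongr
          refine (measure_mono fun g hg => le_trans hg hradius).trans
            (hregular (c₀ * s) (by positivity) m (le_trans (by gcongr) hm) u w)
      _ = _ := by
          rw [← ENNReal.ofReal_mul (by positivity)]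
          ring_nf

theorem LaplaceDecay.convPow_inv_le_of_le
    (hdecay' : LaplaceDecay (μ.map (·⁻¹)) logNorm δ C ℓ) (hδ : 0 < δ) (hC : 0 ≤ C) (hℓ : 0 ≤ ℓ)
    {T : ℝ} {m : ℕ} (hT : T ≤ m) (z : UnitCircle) :
    convPow μ m {h | logNorm h⁻¹ z ≤ ℓ / (2 * δ) * m}
      ≤ ENNReal.ofReal (C * Real.exp (-(ℓ / 2 * T))) := by
  have hhalf : δ * (ℓ / (2 * δ) * m) = ℓ / 2 * m := by field_simp
  refine (hdecay'.convPow_inv_le hδ.le m z _).trans (ENNReal.ofReal_le_ofReal ?_)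
  rw [mul_assoc, ← Real.exp_add, hhalf]
  gcongr
  linarith [mul_le_mul_of_nonneg_left hT (div_nonneg hℓ zero_le_two)]

theorem tsum_convPow_add_backwardNear_inter_le (hδ : 0 < δ) (hC : 0 ≤ C) (hℓ : 0 < ℓ)
    (hdecay : LaplaceDecay μ logNorm δ C ℓ)
    (hdecay' : LaplaceDecay (μ.map (·⁻¹)) logNorm δ C ℓ) {T : ℝ} {m : ℕ} (hT : T ≤ m) (L : ℕ)
    (u w y : UnitCircle) (r t a : ℝ) :
    ∑' n, convPow μ (n + m) (backwardNear u w r ∩ cocycleWindow logNorm y t a) ≤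
      L * (2 * ENNReal.ofReal (C * Real.exp (-(ℓ / 2 * T)))) +
      ∑' n, (convPow μ n).prod (convPow μ m)
        ({p | p.1 * p.2 ∈ cocycleWindow logNorm y t a} ∩
          Prod.snd ⁻¹' backwardNear u w (r + Real.exp (-(2 * (ℓ / (2 * δ) * m))))) +
      ENNReal.ofReal
        (C * Real.exp (δ * (t + a)) * Real.exp (-(ℓ * L)) * (1 - Real.exp (-ℓ))⁻¹) :=
  tsum_le_of_le_add_of_le_exp hℓ
    (fun n => convPow_add_backwardNear_inter_le
      (hdecay'.convPow_inv_le_of_le hδ hC hℓ.le hT)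
      (measurableSet_cocycleWindow measurable_logNorm y t a) n u w r)
    (fun n => (measure_mono Set.inter_subset_right).trans
      (hdecay.convPow_add_cocycleWindow_le hδ.le hC hℓ.le n m y t a)) L

theorem exists_forall_tsum_convPow_add_ceil_le (hε : 0 < ε) (hΛ : 0 < Λ)
    (hmom : MomentGrowth μ ε Λ) (hδ : 0 < δ) (hC : 0 < C) (hℓ : 0 < ℓ)
    (hdecay : LaplaceDecay μ logNorm δ C ℓ)
    (hdecay' : LaplaceDecay (μ.map (·⁻¹)) logNorm δ C ℓ) {η : ℝ} (hη : 0 < η) :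
    ∃ K > 0, ∃ c > 0, ∀ s ≥ 0, ∀ t ≥ s, ∀ a ≥ 0, ∀ y u w,
      ∑' n, convPow μ (n + ⌈η * t⌉₊)
        (backwardNear u w (Real.exp (-s)) ∩ cocycleWindow logNorm y t a)
        ≤ ENNReal.ofReal (K * (1 + a) * Real.exp (-(c * s))) := by
  obtain ⟨K, hK, c, hc, hmiddle⟩ := exists_forall_tsum_prod_inter_backwardNear_le hε hΛ hmom hδ hC
    hℓ hdecay hdecay' hη (γ := ℓ / (2 * δ)) (by positivity)
  obtain ⟨K', hK', c', hc', herror⟩ :=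
    exists_forall_truncation_error_le hδ hC hℓ (show 0 < ℓ / 2 * η by positivity)
  refine ⟨K + K', by positivity, min c c', by positivity, fun s hs t hst a ha y u w => ?_⟩
  have hm : η * t ≤ ⌈η * t⌉₊ := Nat.le_ceil _
  refine (tsum_convPow_add_backwardNear_inter_le hδ hC.le hℓ hdecay hdecay' hm
    ⌈2 * δ / ℓ * (t + a)⌉₊ u w y _ t a).trans ?_
  rw [add_right_comm, ← mul_assoc (ℓ / 2), add_comm]
  calc _ ≤ ENNReal.ofReal (K * (1 + a) * Real.exp (-(c * s))) +
        ENNReal.ofReal (K' * (1 + a) * Real.exp (-(c' * s))) :=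
        add_le_add (hmiddle s hs a ha _ (le_trans (by gcongr) hm) t y u w)
          (herror s hs t hst a ha)
    _ ≤ ENNReal.ofReal ((K * (1 + a) + K' * (1 + a)) * Real.exp (-(min c c' * s))) :=
        ofReal_mul_exp_neg_add_le (by positivity) (by positivity) hs
    _ = _ := by rw [add_mul K]

theorem exists_forall_tsum_convPow_backwardNear_inter_le_of_le (hε : 0 < ε) (hΛ : 0 < Λ)
    (hmom : MomentGrowth μ ε Λ) (hδ : 0 < δ) (hC : 0 < C) (hℓ : 0 < ℓ)
    (hdecay : LaplaceDecay μ logNorm δ C ℓ)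
    (hdecay' : LaplaceDecay (μ.map (·⁻¹)) logNorm δ C ℓ) :
    ∃ K > 0, ∃ c > 0, ∀ s ≥ 0, ∀ t ≥ s, ∀ a ≥ 0, ∀ y u w,
      ∑' n, convPow μ n (backwardNear u w (Real.exp (-s)) ∩ cocycleWindow logNorm y t a)
        ≤ ENNReal.ofReal (K * (1 + a) * Real.exp (-(c * s))) := by
  set η := ε / (2 * Λ)
  have hη : 0 < η := by positivity
  have hΛη : Λ * η ≤ ε / 2 := by simp only [η]; field_simp; rfl
  obtain ⟨K, hK, c, hc, hearly⟩ :=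
    exists_forall_sum_range_ceil_convPow_cocycleWindow_le hε hΛ.le hmom hη.le hΛη
  obtain ⟨K', hK', c', hc', hlate⟩ :=
    exists_forall_tsum_convPow_add_ceil_le hε hΛ hmom hδ hC hℓ hdecay hdecay' hη
  refine ⟨K + K', by positivity, min c c', by positivity, fun s hs t hst a ha y u w => ?_⟩
  rw [← ENNReal.summable.sum_add_tsum_nat_add' (k := ⌈η * t⌉₊)]
  calc _ ≤ ENNReal.ofReal (K * Real.exp (-(c * t))) +
        ENNReal.ofReal (K' * (1 + a) * Real.exp (-(c' * s))) :=
        add_le_add ((Finset.sum_le_sum fun n _ => measure_mono Set.inter_subset_right).trans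
          (hearly t (hs.trans hst) y a)) (hlate s hs t hst a ha y u w)
    _ ≤ ENNReal.ofReal (K * (1 + a) * Real.exp (-(c * s))) +
        ENNReal.ofReal (K' * (1 + a) * Real.exp (-(c' * s))) := by
        gcongr
        exact le_mul_of_one_le_right hK.le (le_add_of_nonneg_right ha)
    _ ≤ ENNReal.ofReal ((K * (1 + a) + K' * (1 + a)) * Real.exp (-(min c c' * s))) :=
        ofReal_mul_exp_neg_add_le (by positivity) (by positivity) hs
    _ = _ := by rw [add_mul K]

theorem exists_forall_tsum_convPow_backwardNear_inter_le (hmom : HasExpMoment μ)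
    (hzd : ZariskiDense μ) :
    ∃ K > 0, ∃ c > 0, ∀ s t, ∀ a ≥ 0, ∀ y u w,
      ∑' n, convPow μ n (backwardNear u w (Real.exp (-s)) ∩ cocycleWindow logNorm y t a)
        ≤ ENNReal.ofReal (K * (1 + a) * Real.exp (-(c * min s t))) := by
  obtain ⟨ε, hε, Λ, hΛ, hgrowth⟩ := hmom.exists_momentGrowth
  obtain ⟨δ, hδ, C, hC, ℓ, hℓ, hdecay, hdecay'⟩ :=
    exists_laplaceDecay_logNorm_and_inv hε hΛ.le hgrowth hzd
  obtain ⟨B, hB, hrenewal⟩ :=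
    exists_forall_tsum_convPow_cocycleWindow_le isCocycle_logNorm measurable_logNorm hδ hC hℓ hdecay
  obtain ⟨K, -, c, hc, hindep⟩ := exists_forall_tsum_convPow_backwardNear_inter_le_of_le
    hε hΛ hgrowth hδ hC hℓ hdecay hdecay'
  refine ⟨max B K, lt_max_of_lt_left hB, c, hc, fun s t a ha y u w => ?_⟩
  rcases le_total 0 (min s t) with hst | hst
  · calc _ ≤ ∑' n, convPow μ n
            (backwardNear u w (Real.exp (-min s t)) ∩ cocycleWindow logNorm y t a) := by
          refine ENNReal.tsum_le_tsum fun n => measure_mono (Set.inter_subset_inter_left _ ?_)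
          exact fun g hg => hg.trans (Real.exp_le_exp.2 (neg_le_neg (min_le_left s t)))
      _ ≤ ENNReal.ofReal (K * (1 + a) * Real.exp (-(c * min s t))) :=
          hindep _ hst t (min_le_right s t) a ha y u w
      _ ≤ _ := by gcongr; exact le_max_right B K
  · calc _ ≤ ∑' n, convPow μ n (cocycleWindow logNorm y t a) :=
          ENNReal.tsum_le_tsum fun n => measure_mono Set.inter_subset_right
      _ ≤ ENNReal.ofReal (B * (1 + a) * 1) := by rw [mul_one]; exact hrenewal a ha t y
      _ ≤ _ := by
          gcongr
          · exact le_max_left B K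
          · exact Real.one_le_exp (neg_nonneg.2 (mul_nonpos_of_nonneg_of_nonpos hc.le hst))

end Independence

/-! ### From the unit circle to the projective line -/

section ProjectiveLine

theorem norm_toLp_eq_enorm2 (v : Fin 2 → ℝ) : ‖(WithLp.toLp 2 v : Plane)‖ = enorm2 v := by
  rw [EuclideanSpace.norm_eq, Fin.sum_univ_two, enorm2, Real.norm_eq_abs, Real.norm_eq_abs, sq_abs,
    sq_abs]

/-- The vector `x.rep` representing `x`, as an element of the Euclidean plane. -/
def planeRep (x : PX) : Plane := WithLp.toLp 2 x.rep

theorem norm_planeRep (x : PX) : ‖planeRep x‖ = enorm2 x.rep := norm_toLp_eq_enorm2 x.rep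

theorem planeRep_ne_zero (x : PX) : planeRep x ≠ 0 := fun h =>
  x.rep_nonzero (congrArg WithLp.ofLp h)

theorem norm_planeRep_pos (x : PX) : 0 < ‖planeRep x‖ := norm_pos_iff.2 (planeRep_ne_zero x)

/-- The point of the unit circle above `x` in the direction of `x.rep`. -/
def unitRep (x : PX) : UnitCircle :=
  ⟨‖planeRep x‖⁻¹ • planeRep x, by
    rw [mem_sphere_zero_iff_norm, norm_smul, norm_inv, norm_norm,
      inv_mul_cancel₀ (norm_planeRep_pos x).ne']⟩

theorem coe_unitRep (x : PX) : (unitRep x : Plane) = ‖planeRep x‖⁻¹ • planeRep x := rfl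

theorem cocycle_eq_logNorm (g : SL2) (x : PX) : cocycle g x = logNorm g (unitRep x) := by
  have hnum :
      enorm2 ((g : Matrix (Fin 2) (Fin 2) ℝ).mulVec x.rep) = ‖linAct g (planeRep x)‖ :=
    (norm_toLp_eq_enorm2 _).symm
  rw [cocycle, hnum, ← norm_planeRep, logNorm, coe_unitRep, map_smul, norm_smul, norm_inv,
    norm_norm, div_eq_inv_mul]

theorem abs_det2_unitRep (x y : PX) :
    |det2 (unitRep x) (unitRep y)| = projDist x y := by
  rw [coe_unitRep, coe_unitRep, det2_smul_left, det2_smul_right, abs_mul, abs_mul, abs_inv, abs_inv,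
    abs_norm, abs_norm, norm_planeRep, norm_planeRep, projDist, ← mul_assoc, ← mul_inv,
    ← div_eq_inv_mul]
  rfl

theorem exists_planeRep_act_eq (g : SL2) (x : PX) :
    ∃ c : ℝ, c ≠ 0 ∧ planeRep (act g x) = c • linAct g (planeRep x) := by
  have hne : Matrix.SpecialLinearGroup.toLin' g x.rep ≠ 0 :=
    (LinearEquiv.map_ne_zero_iff _).2 x.rep_nonzero
  have hact : act g x = Projectivization.mk ℝ (Matrix.SpecialLinearGroup.toLin' g x.rep) hne := by
    conv_lhs => rw [← x.mk_rep, act, Projectivization.map_mk]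
    rfl
  obtain ⟨c, hc⟩ := Projectivization.exists_smul_eq_mk_rep ℝ _ hne
  refine ⟨c, c.ne_zero, ?_⟩
  rw [planeRep, hact, ← hc]
  rfl

theorem projDist_act (g : SL2) (x y : PX) :
    projDist (act g x) y = |det2 (g • unitRep x : UnitCircle) (unitRep y)| := by
  obtain ⟨c, hc, hrep⟩ := exists_planeRep_act_eq g x
  have hx := (norm_planeRep_pos x).ne'
  have hgx := norm_ne_zero_iff.2 (linAct_ne_zero g (planeRep_ne_zero x))
  have hc' := abs_ne_zero.2 hc
  rw [← abs_det2_unitRep, UnitCircle.coe_smul, coe_unitRep, coe_unitRep, coe_unitRep, hrep,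
    map_smul, norm_smul, norm_smul]
  simp only [det2_smul_left, abs_mul, abs_inv, abs_norm, abs_abs, norm_inv,
    Real.norm_eq_abs]
  field_simp

theorem μpi_setOf_eq_convPow (μ : Measure SL2) [IsProbabilityMeasure μ] (n : ℕ) (s a t : ℝ)
    (x x' xo : PX) :
    μpi μ n {g | projDist (act (word g)⁻¹ xo) x' ≤ Real.exp (-s) ∧
      cocycle (word g) x - t ∈ Set.Icc 0 a} =
    convPow μ n (backwardNear (unitRep xo) (unitRep x') (Real.exp (-s)) ∩
      cocycleWindow logNorm (unitRep x) t a) := by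
  have hmeas := (measurableSet_backwardNear (unitRep xo) (unitRep x') (Real.exp (-s))).inter
    (measurableSet_cocycleWindow measurable_logNorm (unitRep x) t a)
  rw [← map_listOfFn_prod_pi, Measure.map_apply (measurable_listOfFn_prod n) hmeas]
  simp only [projDist_act, cocycle_eq_logNorm]
  rfl

end ProjectiveLine

theorem renewal_independence_backward_general
    (μ : Measure SL2) [IsProbabilityMeasure μ]
    (hmom : HasExpMoment μ) (hzd : ZariskiDense μ) :
    ∃ C > (0 : ℝ), ∃ ε' > (0 : ℝ), ∀ (s a t : ℝ) (x x' xo : PX), 0 ≤ a →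
      (∑' n : ℕ, μpi μ n {g | projDist (act (word g)⁻¹ xo) x' ≤ Real.exp (-s) ∧
          cocycle (word g) x - t ∈ Set.Icc 0 a}) ≤
        ENNReal.ofReal (C * (1 + a) * Real.exp (-(ε' * min s t))) := by
  obtain ⟨K, hK, c, hc, h⟩ := exists_forall_tsum_convPow_backwardNear_inter_le hmom hzd
  refine ⟨K, hK, c, hc, fun s a t x x' xo ha => ?_⟩
  simp only [μpi_setOf_eq_convPow]
  exact h s t a ha _ _ _

theorem renewal_independence_backward
    (μ : Measure SL2) [IsProbabilityMeasure μ]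
    (hmom : HasExpMoment μ) (hzd : ZariskiDense μ) :
    ∃ C > (0 : ℝ), ∃ ε' > (0 : ℝ), ∀ (s a t : ℝ) (x x' xo : PX),
      0 < s → 0 < a → max (10 * s) 10 < t →
      (∑' n : ℕ, μpi μ n {g | projDist (act (word g)⁻¹ xo) x' ≤ Real.exp (-s) ∧
          cocycle (word g) x - t ∈ Set.Icc 0 a}) ≤
        ENNReal.ofReal (C * (1 + a) ^ 2 * Real.exp (-(ε' * s))) := by
  obtain ⟨C, hC, ε', hε', h⟩ := renewal_independence_backward_general μ hmom hzd
  refine ⟨C, hC, ε', hε', fun s a t x x' xo hs ha ht => (h s a t x x' xo ha.le).trans ?_⟩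
  rw [min_eq_left (by linarith [(max_lt_iff.1 ht).1])]
  gcongr
  exact le_self_pow₀ (by linarith) two_ne_zero

end
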